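/- Let f_j, g_i be convex polynomials and suppose Assumption 1 holds: there is a saddle point (x̄, μ̄, ν̄) ∈ K_{z₀} × ℝ^m_+ × ℝ^p_+ of the Lagrangian L_{z₀}(x,μ,ν) = λᵀf(x) + Σμ_i g_i(x) + Σν_j(f_j(x) − f_j(z₀)) with ∇²_{xx}L_{z₀}(x̄, μ̄, ν̄) positive definite. Then λᵀf − f̄_{z₀} belongs to the quadratic module Q(−g, −f_{z₀}); i.e., there exist sum-of-squares polynomials σ₀, σ₁,…,σ_m, σ̄₁,…,σ̄_p such that λᵀf − f̄_{z₀} = σ₀ − Σ_i σ_i g_i − Σ_j σ̄_j (f_j − f_j(z₀)). -/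

import Mathlib

/-- A real multivariate polynomial is a sum of squares. -/
def IsSOS {n : ℕ} (q : MvPolynomial (Fin n) ℝ) : Prop :=
  ∃ (r : ℕ) (s : Fin r → MvPolynomial (Fin n) ℝ), q = ∑ l, (s l) ^ 2

/-!
At the saddle point `x̄` the Lagrangian `L`, shifted by its minimum value `v`, is a convex
polynomial with a nondegenerate zero minimum. In coordinates adapted to its growth along rays, the
leading quasihomogeneous form of `L - v` is positive away from the origin, so an ordering of the
polynomial ring that makes `c - L` nonnegative for some real `c` has no infinite coordinate: the
preordering `T` generated by `c - L` and the squares is archimedean, and its set of nonnegativity is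
compact.

Taylor's formula with integral remainder writes `L - v` as `yᵀ A(x) y` with `y = x - x̄` and with a
polynomial matrix `A`, positive definite at every point because `L` is convex and its Hessian is
positive definite at `x̄`. A partition of unity in `T`, subordinate to a finite cover of the compact
set, reduces positivity of `A` on that set to positivity of constant matrices, so that
`yᵀ A(x) y ∈ T`, that is `L - v = s + t (c - L)` with sums of squares `s` and `t`. For
`c = λᵀ f (z₀)` the difference `c - L` is a combination of the constraints with nonpositive constant
coefficients, and expanding it gives the representation.
-/

namespace ConvexSOS

universe u

section Preordering

variable {A : Type u} [CommRing A]

/-- The smallest subsemiring containing `a` and a subsemiring `T` that contains all squares. Unlike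
`RingPreordering`, it may contain `-1`. -/
def adjoin (T : Subsemiring A) (hT : ∀ x, x * x ∈ T) (a : A) : Subsemiring A where
  carrier := {x | ∃ s ∈ T, ∃ t ∈ T, x = s + t * a}
  zero_mem' := ⟨0, T.zero_mem, 0, T.zero_mem, by ring⟩
  one_mem' := ⟨1, T.one_mem, 0, T.zero_mem, by ring⟩
  add_mem' := by
    rintro _ _ ⟨s, hs, t, ht, rfl⟩ ⟨s', hs', t', ht', rfl⟩
    exact ⟨s + s', T.add_mem hs hs', t + t', T.add_mem ht ht', by ring⟩
  mul_mem' := by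
    rintro _ _ ⟨s, hs, t, ht, rfl⟩ ⟨s', hs', t', ht', rfl⟩
    exact ⟨s * s' + t * t' * (a * a),
      T.add_mem (T.mul_mem hs hs') (T.mul_mem (T.mul_mem ht ht') (hT a)),
      s * t' + s' * t, T.add_mem (T.mul_mem hs ht') (T.mul_mem hs' ht), by ring⟩

variable {T : Subsemiring A} (hT : ∀ x, x * x ∈ T) (a : A)

lemma le_adjoin : T ≤ adjoin T hT a := fun x hx => ⟨x, hx, 0, T.zero_mem, by ring⟩

lemma self_mem_adjoin : a ∈ adjoin T hT a := ⟨0, T.zero_mem, 1, T.one_mem, by ring⟩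

lemma adjoin_le {S : Subsemiring A} (hTS : T ≤ S) (ha : a ∈ S) : adjoin T hT a ≤ S := by
  rintro _ ⟨s, hs, t, ht, rfl⟩
  exact S.add_mem (hTS hs) (S.mul_mem (hTS ht) ha)

include hT in
lemma exists_isOrdering_of_neg_one_notMem (h : -1 ∉ T) :
    ∃ O : RingPreordering A, T ≤ O.toSubsemiring ∧ O.IsOrdering := by
  obtain ⟨P, hTP, hP⟩ := zorn_le_nonempty₀ {P : Subsemiring A | -1 ∉ P}
    (fun c hc hchain y hy => by
      refine ⟨sSup c, fun hmem => ?_, fun z hz => le_sSup hz⟩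
      obtain ⟨P, hPc, hP⟩ := (Subsemiring.mem_sSup_of_directedOn ⟨y, hy⟩ hchain.directedOn).1 hmem
      exact hc hPc hP) T h
  have hPsq (x : A) : x * x ∈ P := hTP (hT x)
  have hmax {b : A} (hb : b ∉ P) : -1 ∈ adjoin P hPsq b := by
    by_contra hneg
    exact hb (hP.le_of_ge hneg (le_adjoin hPsq b) (self_mem_adjoin hPsq b))
  let O : RingPreordering A :=
    { P with
      mem_of_isSquare' := by rintro _ ⟨x, rfl⟩; exact hPsq x
      neg_one_notMem' := hP.prop }
  refine ⟨O, hTP, RingPreordering.isOrdering_iff.2 fun b c hbc => ?_⟩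
  by_contra! hcon
  obtain ⟨s, hs, t, ht, hb⟩ := hmax hcon.1
  obtain ⟨s', hs', t', ht', hc⟩ := hmax hcon.2
  have hkey : (-1 : A) = s + s' + s * s' + t * t' * -(b * c) := by
    linear_combination (1 + s') * hb + (-t * b) * hc
  exact hP.prop (hkey ▸ P.add_mem (P.add_mem (P.add_mem hs hs') (P.mul_mem hs hs'))
    (P.mul_mem (P.mul_mem ht ht') hbc))

/-- The positive cone of the ordering induced by `O` on the fraction field of `A` modulo the support
of `O`. The field is presented by a homomorphism `φ` from `A` through which it is generated by
fractions. -/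
def fractionCone {K : Type*} [Field K] (O : RingPreordering A) [O.IsOrdering] (φ : A →+* K)
    (hker : RingHom.ker φ = O.support) (hfrac : ∀ z : K, ∃ a b, φ b ≠ 0 ∧ z = φ a / φ b) :
    RingPreordering K where
  carrier := {z | ∃ a ∈ O, ∃ b, φ b ≠ 0 ∧ z = φ a / φ b ^ 2}
  zero_mem' := ⟨0, zero_mem O, 1, by simp, by simp⟩
  one_mem' := ⟨1, one_mem O, 1, by simp, by simp⟩
  add_mem' := by
    rintro _ _ ⟨a, ha, b, hb, rfl⟩ ⟨a', ha', b', hb', rfl⟩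
    refine ⟨a * (b' * b') + a' * (b * b), add_mem (mul_mem ha (O.mul_self_mem b'))
      (mul_mem ha' (O.mul_self_mem b)), b * b', by simp [hb, hb'], ?_⟩
    simp only [map_add, map_mul]
    field_simp
  mul_mem' := by
    rintro _ _ ⟨a, ha, b, hb, rfl⟩ ⟨a', ha', b', hb', rfl⟩
    refine ⟨a * a', mul_mem ha ha', b * b', by simp [hb, hb'], ?_⟩
    simp only [map_mul]
    field_simp
  mem_of_isSquare' := by
    rintro _ ⟨z, rfl⟩
    obtain ⟨a, b, hb, rfl⟩ := hfrac z
    exact ⟨a * a, O.mul_self_mem a, b, hb, by rw [map_mul]; field_simp⟩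
  neg_one_notMem' := by
    rintro ⟨a, ha, b, hb, h⟩
    have hsum : a + b * b ∈ O.support := by
      rw [← hker, RingHom.mem_ker, map_add, map_mul]
      field_simp at h
      linear_combination -h
    have hsq : b * b ∈ O.support :=
      ⟨O.mul_self_mem b, by simpa using add_mem hsum.2 ha⟩
    rw [← hker, RingHom.mem_ker, map_mul, mul_self_eq_zero] at hsq
    exact hb hsq

lemma exists_fractionField_quotient (I : Ideal A) [I.IsPrime] :
    ∃ (K : Type u) (_ : Field K) (φ : A →+* K),
      RingHom.ker φ = I ∧ ∀ z : K, ∃ a b, φ b ≠ 0 ∧ z = φ a / φ b := by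
  refine ⟨FractionRing (A ⧸ I), inferInstance,
    (algebraMap (A ⧸ I) (FractionRing (A ⧸ I))).comp (Ideal.Quotient.mk I), ?_, fun z => ?_⟩
  · ext a
    simp [RingHom.mem_ker, Ideal.Quotient.eq_zero_iff_mem]
  · obtain ⟨a, b, hb, rfl⟩ := IsFractionRing.div_surjective (A := A ⧸ I) z
    obtain ⟨a, rfl⟩ := Ideal.Quotient.mk_surjective a
    obtain ⟨b, rfl⟩ := Ideal.Quotient.mk_surjective b
    exact ⟨a, b, by simpa using nonZeroDivisors.ne_zero hb, rfl⟩

open Classical in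
lemma exists_orderedField_of_isOrdering (O : RingPreordering A) [O.IsOrdering] :
    ∃ (K : Type u) (_ : Field K) (_ : LinearOrder K) (_ : IsStrictOrderedRing K) (φ : A →+* K),
      ∀ a ∈ O, 0 ≤ φ a := by
  obtain ⟨K, _, φ, hker, hfrac⟩ := exists_fractionField_quotient O.support
  let C : RingCone K :=
    { (fractionCone O φ hker hfrac).toSubsemiring with
      eq_zero_of_mem_of_neg_mem' := RingPreordering.eq_zero_of_mem_of_neg_mem }
  have hC {a b : A} (ha : a ∈ O) (hb : φ b ≠ 0) : φ a / φ b ^ 2 ∈ C := ⟨a, ha, b, hb, rfl⟩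
  have : HasMemOrNegMem C := ⟨fun z => by
    obtain ⟨a, b, hb, rfl⟩ := hfrac z
    have hab : φ a / φ b = φ (a * b) / φ b ^ 2 := by rw [map_mul]; field_simp
    refine (mem_or_neg_mem O (a * b)).imp (fun h => ?_) fun h => ?_
    · rw [hab]
      exact hC h hb
    · rw [hab, ← neg_div, ← map_neg]
      exact hC h hb⟩
  let _ : LinearOrder K := LinearOrder.mkOfAddGroupCone C
  have : IsOrderedRing K := IsOrderedRing.mkOfCone C
  refine ⟨K, inferInstance, inferInstance, IsOrderedRing.toIsStrictOrderedRing K, φ, fun a ha => ?_⟩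
  change φ a - 0 ∈ C
  simpa using hC (b := 1) ha (by simp)

include hT in
lemma exists_orderedField_of_neg_one_notMem (h : -1 ∉ T) :
    ∃ (K : Type u) (_ : Field K) (_ : LinearOrder K) (_ : IsStrictOrderedRing K) (φ : A →+* K),
      ∀ a ∈ T, 0 ≤ φ a := by
  obtain ⟨O, hTO, _⟩ := exists_isOrdering_of_neg_one_notMem hT h
  obtain ⟨K, _, _, _, φ, hφ⟩ := exists_orderedField_of_isOrdering O
  exact ⟨K, _, _, ‹_›, φ, fun a ha => hφ a (hTO ha)⟩

end Preordering

section Bounded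

open MvPolynomial

variable {A : Type*} [CommRing A] [Algebra ℝ A] {T : Subsemiring A} (hT : ∀ x, x * x ∈ T)

include hT in
lemma algebraMap_mem_of_nonneg {r : ℝ} (hr : 0 ≤ r) : algebraMap ℝ A r ∈ T := by
  rw [← Real.mul_self_sqrt hr, map_mul]
  exact hT _

include hT in
lemma smul_mem_of_nonneg {r : ℝ} (hr : 0 ≤ r) {a : A} (ha : a ∈ T) : r • a ∈ T := by
  rw [Algebra.smul_def]
  exact T.mul_mem (algebraMap_mem_of_nonneg hT hr) ha

/-- The subalgebra of the elements `a` that are bounded with respect to `T`, that is, `M - a` and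
`M + a` belong to `T` for some real number `M`. When it is everything, `T` is archimedean. -/
def boundedSubalgebra (T : Subsemiring A) (hT : ∀ x, x * x ∈ T) : Subalgebra ℝ A where
  carrier := {a | ∃ M : ℝ, algebraMap ℝ A M - a ∈ T ∧ algebraMap ℝ A M + a ∈ T}
  add_mem' := by
    rintro a b ⟨M, ha, ha'⟩ ⟨N, hb, hb'⟩
    refine ⟨M + N, ?_, ?_⟩
    · convert T.add_mem ha hb using 1
      rw [map_add]
      ring
    · convert T.add_mem ha' hb' using 1
      rw [map_add]
      ring
  mul_mem' := by
    rintro a b ⟨M, ha, ha'⟩ ⟨N, hb, hb'⟩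
    have half {x y : A} (hx : x ∈ T) (hxy : x = 2 * y) : y ∈ T := by
      have h2 : (2⁻¹ : ℝ) • x = y := by
        rw [hxy, two_mul, ← two_smul ℝ y, smul_smul]
        norm_num
      exact h2 ▸ smul_mem_of_nonneg hT (by norm_num) hx
    refine ⟨M * N, half (T.add_mem (T.mul_mem ha hb') (T.mul_mem ha' hb)) ?_,
      half (T.add_mem (T.mul_mem ha hb) (T.mul_mem ha' hb')) ?_⟩ <;>
    · rw [map_mul]
      ring
  algebraMap_mem' r := ⟨|r|, by
    rw [← map_sub]
    exact algebraMap_mem_of_nonneg hT (by linarith [le_abs_self r]), by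
    rw [← map_add]
    exact algebraMap_mem_of_nonneg hT (by linarith [neg_abs_le r])⟩

lemma mem_boundedSubalgebra_of_mem {a : A} {M : ℝ} (ha : a ∈ T) (h : algebraMap ℝ A M - a ∈ T) :
    a ∈ boundedSubalgebra T hT := by
  refine ⟨max M 0, ?_, T.add_mem (algebraMap_mem_of_nonneg hT (le_max_right M 0)) ha⟩
  have hM : algebraMap ℝ A (max M 0 - M) ∈ T :=
    algebraMap_mem_of_nonneg hT (sub_nonneg.2 (le_max_left M 0))
  convert T.add_mem hM h using 1
  rw [map_sub]
  ring

lemma mem_boundedSubalgebra_of_sub_mul_self_mem {a : A} {M : ℝ}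
    (h : algebraMap ℝ A M - a * a ∈ T) : a ∈ boundedSubalgebra T hT := by
  have hhalf : algebraMap ℝ A 2⁻¹ * 2 = 1 := by
    rw [← map_ofNat (algebraMap ℝ A) 2, ← map_mul]
    norm_num
  refine ⟨M + 2⁻¹ * 2⁻¹, ?_, ?_⟩
  · convert T.add_mem h (hT (algebraMap ℝ A 2⁻¹ - a)) using 1
    rw [map_add, map_mul]
    linear_combination a * hhalf
  · convert T.add_mem h (hT (algebraMap ℝ A 2⁻¹ + a)) using 1
    rw [map_add, map_mul]
    linear_combination (-a) * hhalf

-- Wörmann's trick: an identity `t' * (N - a) = 1 + t` shows that `(1 + t) * (N - a)` lies in `T`,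
-- so that in a bound `M - t = s + u * (N - a)` the factor `N - a` disappears after multiplication
-- by `1 + t`. This bounds `t` in `T`, and `N * (1 + t) - a = (1 + t) * (N - a) + t * a` bounds `a`.
lemma mem_boundedSubalgebra_of_neg_one_mem_adjoin {a : A} {N : ℝ} (hN : 0 ≤ N) (ha : a ∈ T)
    (hneg : -1 ∈ adjoin T hT (a - algebraMap ℝ A N))
    (hbdd : boundedSubalgebra (adjoin T hT (algebraMap ℝ A N - a))
      (fun x => le_adjoin hT _ (hT x)) = ⊤) :
    a ∈ boundedSubalgebra T hT := by
  obtain ⟨t, ht, t', ht', hid⟩ := hneg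
  have hmul : (1 + t) * (algebraMap ℝ A N - a) ∈ T := by
    convert T.mul_mem ht' (hT (algebraMap ℝ A N - a)) using 1
    linear_combination (a - algebraMap ℝ A N) * hid
  have ht_bdd : t ∈ boundedSubalgebra T hT := by
    obtain ⟨M, ⟨s, hs, u, hu, hM⟩, -⟩ : t ∈ boundedSubalgebra (adjoin T hT _) _ :=
      hbdd ▸ Algebra.mem_top
    have hprod : (1 + t) * (algebraMap ℝ A M - t) ∈ T := by
      convert T.add_mem (T.mul_mem (T.add_mem T.one_mem ht) hs) (T.mul_mem hu hmul) using 1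
      rw [hM]
      ring
    refine mem_boundedSubalgebra_of_mem hT ht (M := M + M / 2 * (M / 2)) ?_
    have hhalf : algebraMap ℝ A M = algebraMap ℝ A (M / 2) + algebraMap ℝ A (M / 2) := by
      rw [← map_add, add_halves]
    convert T.add_mem hprod (hT (t - algebraMap ℝ A (M / 2))) using 1
    rw [map_add, map_mul]
    linear_combination (-t) * hhalf
  obtain ⟨M, hM, -⟩ := ht_bdd
  refine mem_boundedSubalgebra_of_mem hT ha (M := N * (1 + M)) ?_
  convert T.add_mem (T.add_mem hmul (T.mul_mem ht ha))
    (T.mul_mem (algebraMap_mem_of_nonneg hT hN) hM) using 1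
  rw [map_mul, map_add, map_one]
  ring

lemma boundedSubalgebra_eq_top_of_sum_sq {σ : Type*} [Fintype σ]
    {T : Subsemiring (MvPolynomial σ ℝ)} (hT : ∀ x, x * x ∈ T)
    (h : ∑ i, X i * X i ∈ boundedSubalgebra T hT) : boundedSubalgebra T hT = ⊤ := by
  classical
  obtain ⟨M, hM, -⟩ := h
  rw [eq_top_iff, ← MvPolynomial.adjoin_range_X, Algebra.adjoin_le_iff]
  rintro _ ⟨i, rfl⟩
  refine mem_boundedSubalgebra_of_sub_mul_self_mem hT (M := M) ?_
  convert T.add_mem hM (T.sum_mem fun j (_ : j ∈ Finset.univ.erase i) => hT (X j)) using 1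
  rw [← Finset.add_sum_erase _ _ (Finset.mem_univ i)]
  ring

end Bounded

section InfinitePoint

open ArchimedeanClass

variable {K : Type*} [Field K] [LinearOrder K] [IsStrictOrderedRing K]

lemma mk_nonneg_of_abs_le_one {x : K} (hx : |x| ≤ 1) : 0 ≤ mk x := by
  rw [← mk_one, mk_le_mk]
  exact ⟨1, by simpa using hx⟩

lemma stdPart_inv_eq_zero {D : K} (hD : ∀ N : ℕ, (N : K) ≤ D) : stdPart D⁻¹ = 0 := by
  have hinf : mk D < 0 := by
    rw [← mk_one, mk_lt_mk]
    intro n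
    have hn := hD (n + 1)
    push_cast at hn
    rw [abs_one, nsmul_one]
    linarith [le_abs_self D]
  rw [stdPart_eq_zero, mk_inv, neg_ne_zero]
  exact hinf.ne

lemma mk_sum_nonneg {ι : Type*} {s : Finset ι} {z : ι → K} (h : ∀ i ∈ s, 0 ≤ mk (z i)) :
    0 ≤ mk (∑ i ∈ s, z i) :=
  Finset.sum_induction z (0 ≤ mk ·) (fun a b ha hb => (le_min ha hb).trans (min_le_mk_add a b))
    (by simp) h

lemma mk_prod_nonneg {ι : Type*} {s : Finset ι} {z : ι → K} (h : ∀ i ∈ s, 0 ≤ mk (z i)) :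
    0 ≤ mk (∏ i ∈ s, z i) :=
  Finset.prod_induction z (0 ≤ mk ·) (fun a b ha hb => by rw [mk_mul]; exact add_nonneg ha hb)
    (by simp) h

lemma mk_pow_nonneg {z : K} (h : 0 ≤ mk z) (n : ℕ) : 0 ≤ mk (z ^ n) := by
  rw [mk_pow]
  exact nsmul_nonneg h n

lemma stdPart_sum {ι : Type*} {s : Finset ι} {z : ι → K} (h : ∀ i ∈ s, 0 ≤ mk (z i)) :
    stdPart (∑ i ∈ s, z i) = ∑ i ∈ s, stdPart (z i) := by
  induction s using Finset.cons_induction with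
  | empty => simp
  | cons i s hi ih =>
    obtain ⟨hzi, hs⟩ := (Finset.forall_mem_cons hi _).1 h
    rw [Finset.sum_cons, Finset.sum_cons, stdPart_add hzi (mk_sum_nonneg hs), ih hs]

lemma stdPart_prod {ι : Type*} {s : Finset ι} {z : ι → K} (h : ∀ i ∈ s, 0 ≤ mk (z i)) :
    stdPart (∏ i ∈ s, z i) = ∏ i ∈ s, stdPart (z i) := by
  induction s using Finset.cons_induction with
  | empty => simp
  | cons i s hi ih =>
    obtain ⟨hzi, hs⟩ := (Finset.forall_mem_cons hi _).1 h
    rw [Finset.prod_cons, Finset.prod_cons, stdPart_mul hzi (mk_prod_nonneg hs), ih hs]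

lemma stdPart_pow {z : K} (h : 0 ≤ mk z) (n : ℕ) : stdPart (z ^ n) = stdPart z ^ n := by
  simpa using stdPart_prod (s := Finset.range n) fun _ _ => h

variable {σ : Type*} [Fintype σ]

omit [LinearOrder K] [IsStrictOrderedRing K] in
lemma prod_pow_div_pow {k d : σ → ℕ} {E : ℕ} (hkd : ∀ i, d i * k i = E) (D : K)
    (a : σ → K) {α : σ → ℕ} (hα : ∑ i, α i * k i ≤ E) :
    ((∏ i, a i ^ α i) / D) ^ E =
      (∏ i, (a i ^ d i / D) ^ (α i * k i)) * D⁻¹ ^ (E - ∑ i, α i * k i) := by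
  have hprod : ∏ i, (a i ^ d i / D) ^ (α i * k i) =
      (∏ i, a i ^ α i) ^ E / D ^ ∑ i, α i * k i := by
    simp only [div_pow, Finset.prod_div_distrib]
    rw [Finset.prod_pow_eq_pow_sum, ← Finset.prod_pow]
    congr 1
    refine Finset.prod_congr rfl fun i _ => ?_
    rw [← pow_mul, ← pow_mul, ← hkd i]
    ring_nf
  rw [hprod, div_pow, inv_pow, ← div_eq_mul_inv, div_div, ← pow_add, Nat.add_sub_cancel' hα]

lemma stdPart_prod_pow_div {a : σ → K} (ha : ∀ i, 0 ≤ a i) {k d : σ → ℕ} {E : ℕ} (hE : E ≠ 0)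
    (hkd : ∀ i, d i * k i = E) {D : K} (hD : ∀ N : ℕ, (N : K) ≤ D) (haD : ∀ i, a i ^ d i ≤ D)
    {η : σ → ℝ} (hη : ∀ i, 0 ≤ η i) (hηd : ∀ i, η i ^ d i = stdPart (a i ^ d i / D))
    {α : σ → ℕ} (hα : ∑ i, α i * k i ≤ E) :
    0 ≤ mk ((∏ i, a i ^ α i) / D) ∧
      stdPart ((∏ i, a i ^ α i) / D) = if ∑ i, α i * k i = E then ∏ i, η i ^ α i else 0 := by
  have hD1 : 1 ≤ D := by simpa using hD 1
  have hD0 : 0 < D := zero_lt_one.trans_le hD1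
  have hDinv0 : 0 ≤ D⁻¹ := inv_nonneg.2 hD0.le
  have hDinv1 : D⁻¹ ≤ 1 := inv_le_one_of_one_le₀ hD1
  have hr0 (i : σ) : 0 ≤ a i ^ d i / D := div_nonneg (pow_nonneg (ha i) _) hD0.le
  have hr1 (i : σ) : a i ^ d i / D ≤ 1 := (div_le_one hD0).2 (haD i)
  set z : K := (∏ i, a i ^ α i) / D
  have hz0 : 0 ≤ z := div_nonneg (Finset.prod_nonneg fun i _ => pow_nonneg (ha i) _) hD0.le
  have hzE : z ^ E = (∏ i, (a i ^ d i / D) ^ (α i * k i)) * D⁻¹ ^ (E - ∑ i, α i * k i) :=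
    prod_pow_div_pow hkd D a hα
  have hz1 : z ≤ 1 := by
    rw [← pow_le_one_iff_of_nonneg hz0 hE, hzE]
    exact mul_le_one₀ (Finset.prod_le_one (fun i _ => pow_nonneg (hr0 i) _)
      fun i _ => pow_le_one₀ (hr0 i) (hr1 i)) (pow_nonneg hDinv0 _) (pow_le_one₀ hDinv0 hDinv1)
  have hfin {x : K} (hx0 : 0 ≤ x) (hx1 : x ≤ 1) : 0 ≤ mk x :=
    mk_nonneg_of_abs_le_one (by rwa [abs_of_nonneg hx0])
  have hrfin (i : σ) : 0 ≤ mk ((a i ^ d i / D) ^ (α i * k i)) :=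
    mk_pow_nonneg (hfin (hr0 i) (hr1 i)) _
  refine ⟨hfin hz0 hz1, (pow_left_inj₀ (stdPart_nonneg hz0) ?_ hE).1 ?_⟩
  · split_ifs
    exacts [Finset.prod_nonneg fun i _ => pow_nonneg (hη i) _, le_rfl]
  · rw [← stdPart_pow (hfin hz0 hz1), hzE, stdPart_mul (mk_prod_nonneg fun i _ => hrfin i)
      (mk_pow_nonneg (hfin hDinv0 hDinv1) _), stdPart_prod fun i _ => hrfin i,
      stdPart_pow (hfin hDinv0 hDinv1), stdPart_inv_eq_zero hD]
    split_ifs with hw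
    · rw [hw, Nat.sub_self, pow_zero, mul_one, ← Finset.prod_pow]
      refine Finset.prod_congr rfl fun i _ => ?_
      rw [stdPart_pow (hfin (hr0 i) (hr1 i)), ← hηd i, ← pow_mul, ← pow_mul, ← hkd i]
      ring_nf
    · rw [zero_pow (by lia), mul_zero, zero_pow hE]

lemma prod_pow_eq_prod_sign_mul_prod_abs (x : σ → K) (α : σ → ℕ) :
    ∏ i, x i ^ α i =
      ((∏ i, (SignType.sign (x i) : ℤ) ^ α i : ℤ) : K) * ∏ i, |x i| ^ α i := by
  rw [Int.cast_prod, ← Finset.prod_mul_distrib]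
  refine Finset.prod_congr rfl fun i _ => ?_
  rw [Int.cast_pow, ← mul_pow, SignType.intCast_cast, sign_mul_abs]

lemma exists_stdPart_prod_pow_div_eq {x : σ → K} {k d : σ → ℕ} {E : ℕ} (hE : E ≠ 0)
    (hd : ∀ i, Even (d i)) (hkd : ∀ i, d i * k i = E) (hD : ∀ N : ℕ, (N : K) ≤ ∑ i, x i ^ d i) :
    ∃ y : σ → ℝ, y ≠ 0 ∧ ∀ α : σ → ℕ, ∑ i, α i * k i ≤ E →
      0 ≤ mk ((∏ i, x i ^ α i) / ∑ i, x i ^ d i) ∧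
        stdPart ((∏ i, x i ^ α i) / ∑ i, x i ^ d i) =
          if ∑ i, α i * k i = E then ∏ i, y i ^ α i else 0 := by
  set D := ∑ i, x i ^ d i with hDdef
  have hD0 : 0 < D := zero_lt_one.trans_le (by simpa using hD 1)
  have hd0 (i : σ) : d i ≠ 0 := left_ne_zero_of_mul (hkd i ▸ hE)
  have habs (i : σ) : |x i| ^ d i = x i ^ d i := (hd i).pow_abs _
  have hxD (i : σ) : x i ^ d i ≤ D :=
    Finset.single_le_sum (f := fun i => x i ^ d i) (fun j _ => (hd j).pow_nonneg _)
      (Finset.mem_univ i)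
  have hr0 (i : σ) : 0 ≤ x i ^ d i / D := div_nonneg ((hd i).pow_nonneg _) hD0.le
  have hrfin (i : σ) : 0 ≤ mk (x i ^ d i / D) :=
    mk_nonneg_of_abs_le_one (by rw [abs_of_nonneg (hr0 i)]; exact (div_le_one hD0).2 (hxD i))
  let η (i : σ) : ℝ := stdPart (x i ^ d i / D) ^ ((d i : ℝ)⁻¹)
  have hη0 (i : σ) : 0 ≤ η i := Real.rpow_nonneg (stdPart_nonneg (hr0 i)) _
  have hηd (i : σ) : η i ^ d i = stdPart (x i ^ d i / D) :=
    Real.rpow_inv_natCast_pow (stdPart_nonneg (hr0 i)) (hd0 i)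
  let s (i : σ) : ℤ := SignType.sign (x i)
  refine ⟨fun i => s i * η i, fun h0 => ?_, fun α hα => ?_⟩
  · have hzero (i : σ) : stdPart (x i ^ d i / D) = 0 := by
      rcases mul_eq_zero.1 (congrFun h0 i) with h | h
      · have hs : (SignType.sign (x i) : ℤ) = 0 := Int.cast_eq_zero.1 h
        have hx : x i = 0 := by
          rw [← sign_mul_abs (x i), ← SignType.intCast_cast, hs, Int.cast_zero, zero_mul]
        simp [hx, hd0 i]
      · rw [← hηd i, h, zero_pow (hd0 i)]
    have hsum : ∑ i, x i ^ d i / D = 1 := by rw [← Finset.sum_div, ← hDdef, div_self hD0.ne']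
    have := stdPart_sum (s := Finset.univ) fun i _ => hrfin i
    simp [hsum, hzero] at this
  · obtain ⟨hfin, hst⟩ := stdPart_prod_pow_div (fun i => abs_nonneg (x i)) hE hkd hD
      (fun i => (habs i).trans_le (hxD i)) hη0 (fun i => by rw [habs, hηd]) hα
    have hint := mk_intCast_nonneg (S := K) (∏ i, s i ^ α i)
    rw [prod_pow_eq_prod_sign_mul_prod_abs, mul_div_assoc]
    refine ⟨by rw [mk_mul]; exact add_nonneg hint hfin, ?_⟩
    rw [stdPart_mul hint hfin, hst, stdPart_intCast, mul_ite, mul_zero]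
    simp only [mul_pow, Finset.prod_mul_distrib, Int.cast_prod, Int.cast_pow]

lemma natCast_le_sum_pow {x : σ → K} {d : σ → ℕ} (hd : ∀ i, Even (d i)) (hd0 : ∀ i, d i ≠ 0)
    (hx : ∀ N : ℕ, (N : K) ≤ ∑ i, x i * x i) (N : ℕ) : (N : K) ≤ ∑ i, x i ^ d i := by
  have hle (i : σ) : x i * x i ≤ 1 + x i ^ d i := by
    have hpos := (hd i).pow_nonneg (x i)
    rw [← abs_mul_abs_self, ← pow_two]
    rcases le_total |x i| 1 with h | h
    · linarith [pow_le_one₀ (n := 2) (abs_nonneg (x i)) h]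
    · have hd2 : 2 ≤ d i := Nat.le_of_dvd (Nat.pos_of_ne_zero (hd0 i)) (hd i).two_dvd
      linarith [pow_le_pow_right₀ h hd2, (hd i).pow_abs (x i)]
  have hsum := Finset.sum_le_sum fun i (_ : i ∈ Finset.univ) => hle i
  have hN := hx (N + Fintype.card σ)
  simp only [Finset.sum_add_distrib, Finset.sum_const, Finset.card_univ, nsmul_eq_mul,
    mul_one] at hsum
  push_cast at hN
  linarith

open MvPolynomial in
lemma eval_weightedHomogeneousComponent {R : Type*} [CommSemiring R] (k : σ → ℕ) (w : ℕ)
    (h : MvPolynomial σ R) (y : σ → R) :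
    eval y (weightedHomogeneousComponent k w h) =
      ∑ α ∈ h.support, if ∑ i, α i * k i = w then h.coeff α * ∏ i, y i ^ α i else 0 := by
  rw [weightedHomogeneousComponent_apply, map_sum, Finset.sum_filter]
  refine Finset.sum_congr rfl fun α _ => ?_
  rw [Finsupp.weight_apply, Finsupp.sum_fintype _ _ (by simp)]
  simp only [smul_eq_mul, eval_monomial, Finsupp.prod_pow]

open MvPolynomial in
lemma lt_eval₂_of_infinite (f : ℝ →+*o K) {h : MvPolynomial σ ℝ} {k d : σ → ℕ} {E : ℕ}
    (hE : E ≠ 0) (hd : ∀ i, Even (d i)) (hkd : ∀ i, d i * k i = E)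
    (hweight : ∀ α ∈ h.support, ∑ i, α i * k i ≤ E)
    (hlead : ∀ y ≠ 0, 0 < eval y (weightedHomogeneousComponent k E h)) {x : σ → K}
    (hx : ∀ N : ℕ, (N : K) ≤ ∑ i, x i * x i) (c : ℝ) :
    f c < eval₂ (f : ℝ →+* K) x h := by
  have hD := natCast_le_sum_pow hd (fun i => left_ne_zero_of_mul (hkd i ▸ hE)) hx
  obtain ⟨y, hy, hmono⟩ := exists_stdPart_prod_pow_div_eq hE hd hkd hD
  set D := ∑ i, x i ^ d i
  have hD0 : 0 < D := zero_lt_one.trans_le (by simpa using hD 1)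
  set m := eval y (weightedHomogeneousComponent k E h) with hm
  have hm0 : 0 < m := hlead y hy
  have hsplit : eval₂ (f : ℝ →+* K) x h / D =
      ∑ α ∈ h.support, f (h.coeff α) * ((∏ i, x i ^ α i) / D) := by
    simp only [eval₂_eq', Finset.sum_div, mul_div_assoc]
    rfl
  have hcoeff (r : ℝ) : 0 ≤ mk (f r) := mk_map_nonneg_of_archimedean f r
  have hterm : ∀ α ∈ h.support, 0 ≤ mk (f (h.coeff α) * ((∏ i, x i ^ α i) / D)) := fun α hα => by
    rw [mk_mul]
    exact add_nonneg (hcoeff _) (hmono α (hweight α hα)).1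
  have hst : stdPart (eval₂ (f : ℝ →+* K) x h / D) = m := by
    rw [hsplit, stdPart_sum hterm, hm, eval_weightedHomogeneousComponent]
    refine Finset.sum_congr rfl fun α hα => ?_
    obtain ⟨hfin, hα⟩ := hmono α (hweight α hα)
    rw [stdPart_mul (hcoeff _) hfin, stdPart_map_real, hα, mul_ite, mul_zero]
  have hlt : f (m / 2) < eval₂ (f : ℝ →+* K) x h / D :=
    lt_of_lt_stdPart f (hsplit ▸ mk_sum_nonneg hterm) (by linarith)
  obtain ⟨N, hN⟩ := exists_nat_ge (c / (m / 2))
  calc f c ≤ f (m / 2 * N) := f.monotone' (by rwa [mul_comm, ← div_le_iff₀ (by positivity)])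
    _ = f (m / 2) * N := by rw [map_mul, map_natCast]
    _ ≤ f (m / 2) * D := mul_le_mul_of_nonneg_left (hD N)
        (by simpa using f.monotone' (by positivity : (0 : ℝ) ≤ m / 2))
    _ < eval₂ (f : ℝ →+* K) x h := (lt_div_iff₀ hD0).1 hlt

end InfinitePoint

section Archimedean

open MvPolynomial

variable {σ : Type*} [Fintype σ] {T : Subsemiring (MvPolynomial σ ℝ)} (hT : ∀ x, x * x ∈ T)

omit [Fintype σ] in
lemma eval₂_comp_C_eq {K : Type*} [CommSemiring K] (φ : MvPolynomial σ ℝ →+* K)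
    (h : MvPolynomial σ ℝ) : eval₂ (φ.comp C) (fun i => φ (X i)) h = φ h := by
  have hφ : eval₂Hom (φ.comp C) (fun i => φ (X i)) = φ := ringHom_ext (by simp) (by simp)
  exact RingHom.congr_fun hφ h

include hT in
omit [Fintype σ] in
lemma exists_orderRingHom_of_nonneg {K : Type*} [Field K] [LinearOrder K] [IsStrictOrderedRing K]
    (φ : MvPolynomial σ ℝ →+* K) (hφ : ∀ p ∈ T, 0 ≤ φ p) :
    ∃ f : ℝ →+*o K, (f : ℝ →+* K) = φ.comp C := by
  refine ⟨{ φ.comp C with monotone' := fun r s hrs => ?_ }, rfl⟩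
  have h := hφ _ (algebraMap_mem_of_nonneg hT (sub_nonneg.2 hrs))
  rwa [algebraMap_eq, C_sub, map_sub, sub_nonneg] at h

lemma neg_one_mem_iSup_adjoin {h : MvPolynomial σ ℝ} {k d : σ → ℕ} {E : ℕ} (hE : E ≠ 0)
    (hd : ∀ i, Even (d i)) (hkd : ∀ i, d i * k i = E)
    (hweight : ∀ α ∈ h.support, ∑ i, α i * k i ≤ E)
    (hlead : ∀ y ≠ 0, 0 < eval y (weightedHomogeneousComponent k E h)) {c : ℝ}
    (hc : C c - h ∈ T) :
    -1 ∈ ⨆ N : ℕ, adjoin T hT (∑ i, X i * X i - algebraMap ℝ _ (N : ℝ)) := by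
  set S : ℕ → Subsemiring (MvPolynomial σ ℝ) :=
    fun N => adjoin T hT (∑ i, X i * X i - algebraMap ℝ _ (N : ℝ))
  by_contra hneg
  have hTS : T ≤ ⨆ N, S N := (le_adjoin hT _).trans (le_iSup S 0)
  obtain ⟨K, _, _, _, φ, hφ⟩ := exists_orderedField_of_neg_one_notMem (fun x => hTS (hT x)) hneg
  obtain ⟨f, hf⟩ := exists_orderRingHom_of_nonneg (fun x => hTS (hT x)) φ hφ
  have hinf (N : ℕ) : (N : K) ≤ ∑ i, φ (X i) * φ (X i) := by
    have := hφ _ (le_iSup S N (self_mem_adjoin hT _))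
    simpa using this
  have hlt := lt_eval₂_of_infinite f hE hd hkd hweight hlead hinf c
  have hle : φ h ≤ φ (C c) := by simpa using hφ _ (hTS hc)
  rw [hf, eval₂_comp_C_eq, ← OrderRingHom.coe_ringHom_apply, hf] at hlt
  exact hle.not_gt hlt

theorem boundedSubalgebra_eq_top_of_leadingForm_pos {h : MvPolynomial σ ℝ} {k d : σ → ℕ} {E : ℕ}
    (hE : E ≠ 0) (hd : ∀ i, Even (d i)) (hkd : ∀ i, d i * k i = E)
    (hweight : ∀ α ∈ h.support, ∑ i, α i * k i ≤ E)
    (hlead : ∀ y ≠ 0, 0 < eval y (weightedHomogeneousComponent k E h)) {c : ℝ}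
    (hc : C c - h ∈ T) : boundedSubalgebra T hT = ⊤ := by
  have hneg := neg_one_mem_iSup_adjoin hT hE hd hkd hweight hlead hc
  have hmono : Monotone fun N : ℕ => adjoin T hT (∑ i, X i * X i - algebraMap ℝ _ (N : ℝ)) := by
    intro N N' hNN'
    refine adjoin_le hT _ (le_adjoin hT _) ?_
    have hpos : algebraMap ℝ (MvPolynomial σ ℝ) (N' - N) ∈ T :=
      algebraMap_mem_of_nonneg hT (sub_nonneg.2 (by exact_mod_cast hNN'))
    convert Subsemiring.add_mem _ (self_mem_adjoin hT (∑ i, X i * X i - algebraMap ℝ _ (N' : ℝ)))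
      (le_adjoin hT _ hpos) using 1
    rw [map_sub]
    ring
  rw [Subsemiring.mem_iSup_of_directed hmono.directed_le] at hneg
  obtain ⟨N, hN⟩ := hneg
  refine boundedSubalgebra_eq_top_of_sum_sq hT (mem_boundedSubalgebra_of_neg_one_mem_adjoin hT
    N.cast_nonneg (T.sum_mem fun i _ => hT (X i)) hN ?_)
  refine boundedSubalgebra_eq_top_of_sum_sq _ ⟨N, self_mem_adjoin hT _, ?_⟩
  exact Subsemiring.add_mem _ (le_adjoin hT _ (algebraMap_mem_of_nonneg hT N.cast_nonneg))
    (Subsemiring.sum_mem _ fun i _ => le_adjoin hT _ (hT (X i)))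

end Archimedean

section Univariate

open Filter Topology Polynomial

lemma natDegree_le_of_eval_le {P Q : ℝ[X]} (hP : ∀ t, 0 ≤ P.eval t)
    (hPQ : ∀ t, P.eval t ≤ Q.eval t) : P.natDegree ≤ Q.natDegree := by
  by_contra! hlt
  have hP0 : P ≠ 0 := by
    rintro rfl
    simp at hlt
  have hlim := div_tendsto_atTop_zero_of_degree_lt Q P (degree_lt_degree hlt)
  refine zero_lt_one.not_ge (ge_of_tendsto hlim ?_)
  filter_upwards [eventually_atTop_not_isRoot P hP0] with t ht
  exact (one_le_div ((hP t).lt_of_ne fun h => ht h.symm)).2 (hPQ t)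

lemma tendsto_eval_div_pow_atTop {P : ℝ[X]} {E : ℕ} (hP : P.natDegree ≤ E) :
    Tendsto (fun s : ℝ => P.eval s / s ^ E) atTop (𝓝 (P.coeff E)) := by
  have hlim : Tendsto (fun s : ℝ => (P.reflect E).eval s⁻¹) atTop (𝓝 ((P.reflect E).eval 0)) :=
    ((P.reflect E).continuous.tendsto 0).comp tendsto_inv_atTop_zero
  rw [← coeff_zero_eq_eval_zero, coeff_reflect, revAt_le E.zero_le, Nat.sub_zero] at hlim
  refine hlim.congr' ?_
  filter_upwards [eventually_gt_atTop 0] with s hs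
  let _ : Invertible s := invertibleOfNonzero hs.ne'
  rw [eq_div_iff (pow_pos hs E).ne']
  simpa using eval₂_reflect_mul_pow (RingHom.id ℝ) s E P hP

lemma coeff_nonneg_of_eval_nonneg {P : ℝ[X]} {E : ℕ} (hPE : P.natDegree ≤ E)
    (hP : ∀ t, 0 ≤ P.eval t) : 0 ≤ P.coeff E := by
  refine ge_of_tendsto (tendsto_eval_div_pow_atTop hPE) ?_
  filter_upwards [eventually_ge_atTop 0] with s hs
  exact div_nonneg (hP s) (pow_nonneg hs E)

lemma even_natDegree_of_eval_nonneg {P : ℝ[X]} (hP : ∀ t, 0 ≤ P.eval t) : Even P.natDegree := by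
  by_contra hodd
  have hdeg : (P.comp (-X)).natDegree = P.natDegree := by simp [natDegree_comp]
  have hneg : (P.comp (-X)).leadingCoeff = -P.leadingCoeff := by
    rw [comp_neg_X_leadingCoeff_eq, (Nat.not_even_iff_odd.1 hodd).neg_one_pow, neg_one_mul]
  have hpos := coeff_nonneg_of_eval_nonneg (P := P.comp (-X)) le_rfl fun t => by
    simpa [eval_comp] using hP (-t)
  rw [coeff_natDegree, hneg] at hpos
  have hlead : P.leadingCoeff = 0 :=
    le_antisymm (by linarith) (coeff_nonneg_of_eval_nonneg le_rfl hP)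
  rw [leadingCoeff_eq_zero.1 hlead, natDegree_zero] at hodd
  exact hodd Even.zero

end Univariate

section Line

open MvPolynomial

variable {σ : Type*}

lemma polynomial_eval_aeval (γ : σ → Polynomial ℝ) (q : MvPolynomial σ ℝ) (t : ℝ) :
    (aeval γ q).eval t = eval (fun i => (γ i).eval t) q := by
  have hC : (Polynomial.evalRingHom t).comp (algebraMap ℝ (Polynomial ℝ)) = RingHom.id ℝ :=
    RingHom.ext fun r => by simp
  rw [aeval_def, polynomial_eval_eval₂, hC]
  rfl

/-- The restriction `t ↦ q (a + t • v)` of a polynomial `q` to a line. -/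
noncomputable def lineRestrict (a v : σ → ℝ) : MvPolynomial σ ℝ →ₐ[ℝ] Polynomial ℝ :=
  aeval fun i => Polynomial.C (a i) + Polynomial.C (v i) * Polynomial.X

lemma eval_lineRestrict (a v : σ → ℝ) (q : MvPolynomial σ ℝ) (t : ℝ) :
    (lineRestrict a v q).eval t = eval (a + t • v) q := by
  rw [lineRestrict, polynomial_eval_aeval]
  congr 2
  ext i
  simp only [Polynomial.eval_add, Polynomial.eval_mul, Polynomial.eval_C, Polynomial.eval_X,
    Pi.add_apply, Pi.smul_apply, smul_eq_mul, mul_comm t]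

/-- The growth rate of `q` along the direction `v`, as a degree. -/
noncomputable def rayDegree (q : MvPolynomial σ ℝ) (a v : σ → ℝ) : ℕ :=
  (lineRestrict a v q).natDegree

lemma lineRestrict_smul (q : MvPolynomial σ ℝ) (a v : σ → ℝ) (c : ℝ) :
    lineRestrict a (c • v) q = (lineRestrict a v q).comp (Polynomial.C c * Polynomial.X) := by
  refine Polynomial.funext fun t => ?_
  rw [Polynomial.eval_comp, eval_lineRestrict, eval_lineRestrict, smul_smul, mul_comm]
  simp only [Polynomial.eval_mul, Polynomial.eval_C, Polynomial.eval_X]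

lemma rayDegree_smul_le (q : MvPolynomial σ ℝ) (a v : σ → ℝ) (c : ℝ) :
    rayDegree q a (c • v) ≤ rayDegree q a v := by
  rw [rayDegree, lineRestrict_smul]
  exact Polynomial.natDegree_comp_le.trans (mul_le_of_le_one_right (Nat.zero_le _)
    ((Polynomial.natDegree_C_mul_le _ _).trans Polynomial.natDegree_X_le))

/-- The polynomial `q` is convex with minimum value `0` attained at `a`, and its Hessian at `a` is
positive definite. The Hessian enters through the second Taylor coefficient of `q` along lines,
which makes the notion manifestly invariant under affine changes of coordinates. -/
structure HasNondegenerateMinAt (q : MvPolynomial σ ℝ) (a : σ → ℝ) : Prop where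
  convexOn : ConvexOn ℝ Set.univ fun x => eval x q
  eval_eq_zero : eval a q = 0
  eval_nonneg : ∀ x, 0 ≤ eval x q
  coeff_two_pos : ∀ v ≠ 0, 0 < (lineRestrict a v q).coeff 2

namespace HasNondegenerateMinAt

variable {q : MvPolynomial σ ℝ} {a : σ → ℝ}

lemma rayDegree_pos (hq : HasNondegenerateMinAt q a) {v : σ → ℝ} (hv : v ≠ 0) :
    0 < rayDegree q a v :=
  two_pos.trans_le (Polynomial.le_natDegree_of_ne_zero (hq.coeff_two_pos v hv).ne')

lemma even_rayDegree (hq : HasNondegenerateMinAt q a) (v : σ → ℝ) : Even (rayDegree q a v) :=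
  even_natDegree_of_eval_nonneg fun t => by
    rw [eval_lineRestrict]
    exact hq.eval_nonneg _

end HasNondegenerateMinAt

lemma natDegree_aeval_sum_smul_le {q : MvPolynomial σ ℝ}
    (hconv : ConvexOn ℝ Set.univ fun x => eval x q) (hnonneg : ∀ x, 0 ≤ eval x q) {ι : Type*}
    {s : Finset ι} {w : ι → ℝ} (hw : ∀ i ∈ s, 0 ≤ w i) (hw1 : ∑ i ∈ s, w i = 1)
    {γ : ι → σ → Polynomial ℝ} {E : ℕ} (hγ : ∀ i ∈ s, (aeval (γ i) q).natDegree ≤ E) :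
    (aeval (∑ i ∈ s, w i • γ i) q).natDegree ≤ E := by
  refine (natDegree_le_of_eval_le (Q := ∑ i ∈ s, w i • aeval (γ i) q) (fun t => ?_)
    fun t => ?_).trans (Polynomial.natDegree_sum_le_of_forall_le _ _ fun i hi =>
      (Polynomial.natDegree_smul_le _ _).trans (hγ i hi))
  · rw [polynomial_eval_aeval]
    exact hnonneg _
  · have hpoint : (fun j => ((∑ i ∈ s, w i • γ i) j).eval t) =
        ∑ i ∈ s, w i • fun j => (γ i j).eval t := by
      ext j
      simp [Polynomial.eval_finsetSum]
    simp only [polynomial_eval_aeval, Polynomial.eval_finsetSum, Polynomial.eval_smul, hpoint]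
    exact hconv.map_sum_le hw hw1 fun _ _ => Set.mem_univ _

end Line

section AffinePullback

open MvPolynomial

variable {σ ι : Type*} [Fintype ι]

/-- Substitution of the affine parametrization `y ↦ a + ∑ i, y i • b i` into a polynomial. -/
noncomputable def affinePullback (a : σ → ℝ) (b : ι → σ → ℝ) :
    MvPolynomial σ ℝ →ₐ[ℝ] MvPolynomial ι ℝ :=
  aeval fun j => C (a j) + ∑ i, C (b i j) * X i

lemma eval_affinePullback (a : σ → ℝ) (b : ι → σ → ℝ) (q : MvPolynomial σ ℝ) (y : ι → ℝ) :
    eval y (affinePullback a b q) = eval (a + ∑ i, y i • b i) q := by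
  have hcomp : (eval y).comp (affinePullback a b : MvPolynomial σ ℝ →+* MvPolynomial ι ℝ) =
      eval (a + ∑ i, y i • b i) :=
    ringHom_ext (by simp [affinePullback]) (by simp [affinePullback, mul_comm])
  exact RingHom.congr_fun hcomp q

lemma lineRestrict_affinePullback (a : σ → ℝ) (b : ι → σ → ℝ) (q : MvPolynomial σ ℝ)
    (y : ι → ℝ) :
    lineRestrict 0 y (affinePullback a b q) = lineRestrict a (∑ i, y i • b i) q := by
  refine Polynomial.funext fun t => ?_
  rw [eval_lineRestrict, eval_lineRestrict, eval_affinePullback, zero_add, Finset.smul_sum]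
  simp only [Pi.smul_apply, smul_eq_mul, mul_smul]

lemma exists_affinePullback_leftInverse [Finite σ] (a : σ → ℝ) (b : Module.Basis ι ℝ (σ → ℝ)) :
    ∃ ψ : MvPolynomial ι ℝ →ₐ[ℝ] MvPolynomial σ ℝ, ∀ q, ψ (affinePullback a b q) = q := by
  cases nonempty_fintype σ
  classical
  refine ⟨affinePullback (-b.equivFun a) fun j => b.equivFun (Pi.single j 1),
    fun q => MvPolynomial.funext fun x => ?_⟩
  have hcoord : ∑ j, x j • b.equivFun (Pi.single j 1) = b.equivFun x := by
    conv_rhs => rw [pi_eq_sum_univ' x, map_sum]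
    simp only [map_smul]
  rw [eval_affinePullback, eval_affinePullback, hcoord, ← Module.Basis.equivFun_symm_apply,
    ← map_neg, ← map_add, LinearEquiv.symm_apply_apply, add_neg_cancel_left]

lemma HasNondegenerateMinAt.affinePullback {q : MvPolynomial σ ℝ} {a : σ → ℝ}
    (hq : HasNondegenerateMinAt q a) (b : Module.Basis ι ℝ (σ → ℝ)) :
    HasNondegenerateMinAt (affinePullback a b q) 0 where
  convexOn := by
    simp only [eval_affinePullback, ← Module.Basis.equivFun_symm_apply]
    exact (hq.convexOn.translate_right a).comp_linearMap (b.equivFun.symm : (ι → ℝ) →ₗ[ℝ] σ → ℝ)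
  eval_eq_zero := by
    rw [eval_affinePullback]
    simp only [Pi.zero_apply, zero_smul, Finset.sum_const_zero, add_zero, hq.eval_eq_zero]
  eval_nonneg y := by
    rw [eval_affinePullback]
    exact hq.eval_nonneg _
  coeff_two_pos y hy := by
    rw [lineRestrict_affinePullback, ← Module.Basis.equivFun_symm_apply]
    exact hq.coeff_two_pos _ ((LinearEquiv.map_ne_zero_iff _).2 hy)

lemma exists_basis_rayDegree_le [Finite σ] (q : MvPolynomial σ ℝ) (a : σ → ℝ) :
    ∃ b : Module.Basis σ ℝ (σ → ℝ),
      ∀ i v, b.repr v i ≠ 0 → rayDegree q a (b i) ≤ rayDegree q a v := by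
  cases nonempty_fintype σ
  classical
  obtain ⟨b, -, hmin⟩ := exists_minimalFor_of_wellFoundedLT (fun _ => True)
    (fun b : Module.Basis σ ℝ (σ → ℝ) => ∑ i, rayDegree q a (b i)) ⟨Pi.basisFun ℝ σ, trivial⟩
  refine ⟨b, fun i v hv => ?_⟩
  by_contra! hlt
  have hli : LinearIndependent ℝ (Function.update b i v) :=
    b.linearIndependent.update i v
      ⟨1, one_mem _, b.repr v, mem_nonZeroDivisors_of_ne_zero hv, by simp⟩
  let b' := basisOfLinearIndependentOfCardEqFinrank' _ hli (by simp)
  have hsum : ∑ j, rayDegree q a (b' j) < ∑ j, rayDegree q a (b j) := by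
    simp only [b', coe_basisOfLinearIndependentOfCardEqFinrank']
    refine Finset.sum_lt_sum (fun j _ => ?_) ⟨i, Finset.mem_univ i, by simpa using hlt⟩
    rcases eq_or_ne j i with rfl | hj
    · simpa using hlt.le
    · rw [Function.update_of_ne hj]
  exact hsum.not_ge (hmin trivial hsum.le)

end AffinePullback

section AdaptedCoordinates

open MvPolynomial Filter Topology

variable {σ : Type*}

/-- The restriction of a polynomial to the monomial curve `s ↦ (y i * s ^ k i)ᵢ`. -/
noncomputable def monomialCurve (k : σ → ℕ) (y : σ → ℝ) : MvPolynomial σ ℝ →ₐ[ℝ] Polynomial ℝ :=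
  aeval fun i => Polynomial.C (y i) * Polynomial.X ^ k i

lemma eval_monomialCurve (k : σ → ℕ) (y : σ → ℝ) (q : MvPolynomial σ ℝ) (s : ℝ) :
    (monomialCurve k y q).eval s = eval (fun i => y i * s ^ k i) q := by
  simp only [monomialCurve, polynomial_eval_aeval, Polynomial.eval_mul, Polynomial.eval_C,
    Polynomial.eval_pow, Polynomial.eval_X]

lemma monomialCurve_const (κ : ℕ) (y : σ → ℝ) (q : MvPolynomial σ ℝ) :
    monomialCurve (fun _ => κ) y q = Polynomial.expand ℝ κ (lineRestrict 0 y q) := by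
  refine Polynomial.funext fun s => ?_
  rw [eval_monomialCurve, Polynomial.expand_eval, eval_lineRestrict, zero_add]
  congr 2
  ext i
  exact mul_comm _ _

lemma eq_zero_of_quasihomogeneous {k : σ → ℕ} {E : ℕ} {G : (σ → ℝ) → ℝ}
    (hcont : Continuous G) (hG : ∀ y, 0 ≤ G y)
    (hsmul : ∀ a, 0 ≤ a → a ≤ 1 → ∀ y, G (a • y) ≤ a * G y)
    (hdil : ∀ s y, G (fun i => y i * s ^ k i) = G y * s ^ E) {y : σ → ℝ} (hy : G y = 0) {κ : ℕ}
    (hκ : ∀ i, y i ≠ 0 → k i ≤ κ) : G (fun i => if k i = κ then y i else 0) = 0 := by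
  have hlim : Tendsto (fun s : ℝ => (s ^ κ)⁻¹ • fun i => y i * s ^ k i) atTop
      (𝓝 fun i => if k i = κ then y i else 0) := by
    refine tendsto_pi_nhds.2 fun i => ?_
    rcases eq_or_ne (y i) 0 with hyi | hyi
    · simp [hyi]
    rcases (hκ i hyi).lt_or_eq with hlt | heq
    · simpa [hlt.ne, div_eq_inv_mul, mul_left_comm] using
        (tendsto_pow_div_pow_atTop_zero (𝕜 := ℝ) hlt).const_mul (y i)
    · refine tendsto_const_nhds.congr' ?_
      filter_upwards [eventually_gt_atTop 0] with s hs
      simp [heq, mul_comm (y i), hs.ne']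
  refine le_antisymm (le_of_tendsto ((hcont.tendsto _).comp hlim) ?_) (hG _)
  filter_upwards [eventually_ge_atTop 1] with s hs
  have hs1 : 1 ≤ s ^ κ := one_le_pow₀ hs
  refine (hsmul _ (by positivity) (inv_le_one_of_one_le₀ hs1) _).trans_eq ?_
  rw [hdil, hy, zero_mul, mul_zero]

variable [Finite σ]

lemma coeff_monomialCurve (k : σ → ℕ) (y : σ → ℝ) (q : MvPolynomial σ ℝ) (w : ℕ) :
    (monomialCurve k y q).coeff w = eval y (weightedHomogeneousComponent k w q) := by
  cases nonempty_fintype σ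
  have hmonomial (α : σ →₀ ℕ) : algebraMap ℝ (Polynomial ℝ) (q.coeff α) *
      ∏ i, (Polynomial.C (y i) * Polynomial.X ^ k i) ^ α i =
        Polynomial.C (q.coeff α * ∏ i, y i ^ α i) * Polynomial.X ^ ∑ i, α i * k i := by
    simp only [mul_pow, Finset.prod_mul_distrib, ← pow_mul, Finset.prod_pow_eq_pow_sum,
      Polynomial.C_mul, map_prod, Polynomial.C_pow, mul_comm (k _), mul_assoc,
      Polynomial.algebraMap_eq]
  rw [monomialCurve, aeval_def, eval₂_eq', Polynomial.finsetSum_coeff,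
    eval_weightedHomogeneousComponent]
  simp only [hmonomial, Polynomial.coeff_C_mul_X_pow, eq_comm]

variable {q : MvPolynomial σ ℝ} {k : σ → ℕ} {E : ℕ}

lemma HasNondegenerateMinAt.natDegree_monomialCurve_le [DecidableEq σ]
    (hq : HasNondegenerateMinAt q 0)
    (hk : ∀ i, rayDegree q 0 (Pi.single i 1) * k i = E) (y : σ → ℝ) :
    (monomialCurve k y q).natDegree ≤ E := by
  cases nonempty_fintype σ
  rcases isEmpty_or_nonempty σ with hσ | hσ
  · rw [eq_C_of_isEmpty q, ← algebraMap_eq, AlgHom.commutes, Polynomial.algebraMap_eq,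
      Polynomial.natDegree_C]
    exact E.zero_le
  · have hn : (Fintype.card σ : ℝ) ≠ 0 := by exact_mod_cast Fintype.card_ne_zero
    let n : ℝ := Fintype.card σ
    have hcomb : (fun i => Polynomial.C (y i) * Polynomial.X ^ k i) =
        ∑ i, n⁻¹ • fun j =>
          Polynomial.C (((n * y i) • Pi.single i (1 : ℝ) : σ → ℝ) j) * Polynomial.X ^ k i := by
      ext1 j
      rw [Finset.sum_apply, Finset.sum_eq_single j (fun i _ hij => by simp [hij.symm]) (by simp)]
      simp [Polynomial.smul_eq_C_mul, ← mul_assoc, ← Polynomial.C_mul, -map_mul, n, hn]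
    rw [monomialCurve, hcomb]
    refine natDegree_aeval_sum_smul_le hq.convexOn hq.eval_nonneg (fun _ _ => by positivity)
      (by simp [n, hn]) fun i _ => ?_
    change (monomialCurve (fun _ => k i) ((n * y i) • Pi.single i 1) q).natDegree ≤ E
    rw [monomialCurve_const, Polynomial.natDegree_expand, ← hk i]
    exact Nat.mul_le_mul_right _ (rayDegree_smul_le q 0 _ _)

omit [Finite σ] in
lemma HasNondegenerateMinAt.sum_mul_le_of_mem_support [Fintype σ] [DecidableEq σ]
    (hq : HasNondegenerateMinAt q 0) (hk : ∀ i, rayDegree q 0 (Pi.single i 1) * k i = E)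
    {α : σ →₀ ℕ} (hα : α ∈ q.support) : ∑ i, α i * k i ≤ E := by
  by_contra! hlt
  have hzero : weightedHomogeneousComponent k (∑ i, α i * k i) q = 0 :=
    MvPolynomial.funext fun y => by
      rw [← coeff_monomialCurve, map_zero]
      exact Polynomial.coeff_eq_zero_of_natDegree_lt
        ((hq.natDegree_monomialCurve_le hk y).trans_lt hlt)
  have hcoeff := congrArg (coeff α) hzero
  rw [coeff_weightedHomogeneousComponent, if_pos, coeff_zero] at hcoeff
  · exact mem_support_iff.1 hα hcoeff
  · simp [Finsupp.weight_apply, Finsupp.sum_fintype]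

lemma eval_weightedHomogeneousComponent_mul_pow (s : ℝ) (y : σ → ℝ) :
    eval (fun i => y i * s ^ k i) (weightedHomogeneousComponent k E q) =
      eval y (weightedHomogeneousComponent k E q) * s ^ E := by
  cases nonempty_fintype σ
  rw [eval_weightedHomogeneousComponent, eval_weightedHomogeneousComponent, Finset.sum_mul]
  refine Finset.sum_congr rfl fun α _ => ?_
  split_ifs with hα
  · rw [← hα, ← Finset.prod_pow_eq_pow_sum, mul_assoc, ← Finset.prod_mul_distrib]
    simp only [mul_pow, ← pow_mul, mul_comm (k _)]
  · rw [zero_mul]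

namespace HasNondegenerateMinAt

variable [DecidableEq σ]

lemma leadingForm_nonneg (hq : HasNondegenerateMinAt q 0)
    (hk : ∀ i, rayDegree q 0 (Pi.single i 1) * k i = E) (y : σ → ℝ) :
    0 ≤ eval y (weightedHomogeneousComponent k E q) := by
  rw [← coeff_monomialCurve]
  refine coeff_nonneg_of_eval_nonneg (hq.natDegree_monomialCurve_le hk y) fun s => ?_
  rw [eval_monomialCurve]
  exact hq.eval_nonneg _

lemma leadingForm_smul_le (hq : HasNondegenerateMinAt q 0)
    (hk : ∀ i, rayDegree q 0 (Pi.single i 1) * k i = E) {a : ℝ} (ha : 0 ≤ a) (ha1 : a ≤ 1)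
    (y : σ → ℝ) :
    eval (a • y) (weightedHomogeneousComponent k E q) ≤
      a * eval y (weightedHomogeneousComponent k E q) := by
  rw [← coeff_monomialCurve, ← coeff_monomialCurve]
  refine le_of_tendsto_of_tendsto (tendsto_eval_div_pow_atTop (hq.natDegree_monomialCurve_le hk _))
    ((tendsto_eval_div_pow_atTop (hq.natDegree_monomialCurve_le hk y)).const_mul a) ?_
  filter_upwards [eventually_ge_atTop 0] with s hs
  rw [← mul_div_assoc, eval_monomialCurve, eval_monomialCurve]
  refine div_le_div_of_nonneg_right ?_ (pow_nonneg hs E)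
  have hconv := hq.convexOn.2 (Set.mem_univ fun i => y i * s ^ k i) (Set.mem_univ 0) ha
    (sub_nonneg.2 ha1) (add_sub_cancel a 1)
  simp only [hq.eval_eq_zero, smul_zero, smul_eq_mul, mul_zero, add_zero] at hconv
  convert hconv using 3
  ext i
  simp [mul_assoc]

lemma leadingForm_pos (hq : HasNondegenerateMinAt q 0)
    (hadapted : ∀ i v, v i ≠ 0 → rayDegree q 0 (Pi.single i 1) ≤ rayDegree q 0 v) (hE : E ≠ 0)
    (hk : ∀ i, rayDegree q 0 (Pi.single i 1) * k i = E) {y : σ → ℝ} (hy : y ≠ 0) :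
    0 < eval y (weightedHomogeneousComponent k E q) := by
  cases nonempty_fintype σ
  refine (hq.leadingForm_nonneg hk y).lt_of_ne' fun hy0 => ?_
  obtain ⟨i, hi, hmax⟩ := Finset.exists_max_image {i | y i ≠ 0} k
    ((Function.ne_iff.1 hy).imp fun i hi => by simpa using hi)
  simp only [Finset.mem_filter_univ] at hi hmax
  set z : σ → ℝ := fun j => if k j = k i then y j else 0 with hz
  have hzi : z i ≠ 0 := by simpa [hz] using hi
  have hk0 : 0 < k i := Nat.pos_of_ne_zero (right_ne_zero_of_mul (hk i ▸ hE))
  have hz0 : eval z (weightedHomogeneousComponent k E q) = 0 :=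
    eq_zero_of_quasihomogeneous (E := E) (MvPolynomial.continuous_eval _)
      (hq.leadingForm_nonneg hk) (fun a ha ha1 => hq.leadingForm_smul_le hk ha ha1)
      eval_weightedHomogeneousComponent_mul_pow hy0 hmax
  have hcurve : monomialCurve k z q = Polynomial.expand ℝ (k i) (lineRestrict 0 z q) := by
    rw [← monomialCurve_const, monomialCurve, monomialCurve]
    congr 2
    ext1 j
    simp only [hz]
    split_ifs with hj
    · rw [hj]
    · simp
  have hdeg : (lineRestrict 0 z q).natDegree = rayDegree q 0 (Pi.single i 1) := by
    refine le_antisymm (Nat.le_of_mul_le_mul_right ?_ hk0) (hadapted i z hzi)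
    rw [← Polynomial.natDegree_expand, ← hcurve, hk i]
    exact hq.natDegree_monomialCurve_le hk z
  rw [← coeff_monomialCurve, hcurve, ← hk i, Polynomial.coeff_expand_mul hk0, ← hdeg,
    Polynomial.coeff_natDegree, Polynomial.leadingCoeff_eq_zero] at hz0
  refine (hq.rayDegree_pos (v := z) fun h => hzi (congrFun h i)).ne' ?_
  rw [rayDegree, hz0, Polynomial.natDegree_zero]

theorem boundedSubalgebra_eq_top (hq : HasNondegenerateMinAt q 0)
    (hadapted : ∀ i v, v i ≠ 0 → rayDegree q 0 (Pi.single i 1) ≤ rayDegree q 0 v)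
    {T : Subsemiring (MvPolynomial σ ℝ)} (hT : ∀ x, x * x ∈ T) {c : ℝ} (hc : C c - q ∈ T) :
    boundedSubalgebra T hT = ⊤ := by
  cases nonempty_fintype σ
  have hd (i : σ) : 0 < rayDegree q 0 (Pi.single i 1) := hq.rayDegree_pos (by simp)
  have hk (i : σ) : rayDegree q 0 (Pi.single i 1) *
      ((∏ j, rayDegree q 0 (Pi.single j 1)) / rayDegree q 0 (Pi.single i 1)) =
        ∏ j, rayDegree q 0 (Pi.single j 1) :=
    Nat.mul_div_cancel' (Finset.dvd_prod_of_mem _ (Finset.mem_univ i))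
  have hE : ∏ j, rayDegree q 0 (Pi.single j 1) ≠ 0 := (Finset.prod_pos fun i _ => hd i).ne'
  exact boundedSubalgebra_eq_top_of_leadingForm_pos hT hE (fun i => hq.even_rayDegree _) hk
    (fun α hα => hq.sum_mul_le_of_mem_support hk hα)
    (fun y hy => hq.leadingForm_pos hadapted hE hk hy) hc

end HasNondegenerateMinAt

end AdaptedCoordinates

section Hessian

open MvPolynomial Matrix

variable {σ : Type*}

lemma pderiv_pderiv_comm {R : Type*} [CommRing R] (i j : σ) (q : MvPolynomial σ R) :
    pderiv i (pderiv j q) = pderiv j (pderiv i q) := by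
  classical
  have hbracket : ⁅(pderiv i : Derivation R (MvPolynomial σ R) _), pderiv j⁆ = 0 :=
    derivation_ext fun l => by
      rw [Derivation.commutator_apply, pderiv_X, pderiv_X, Pi.single_apply, Pi.single_apply]
      split_ifs <;> simp
  have h := DFunLike.congr_fun hbracket q
  rwa [Derivation.commutator_apply, Derivation.zero_apply, sub_eq_zero] at h

/-- The Hessian matrix of a polynomial, as a matrix of polynomials. -/
noncomputable def hessian (q : MvPolynomial σ ℝ) : Matrix σ σ (MvPolynomial σ ℝ) :=
  Matrix.of fun i j => pderiv i (pderiv j q)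

lemma isHermitian_map_hessian (q : MvPolynomial σ ℝ) (f : MvPolynomial σ ℝ → ℝ) :
    ((hessian q).map f).IsHermitian :=
  Matrix.ext fun i j => congrArg f (pderiv_pderiv_comm j i q)

variable [Fintype σ]

lemma derivative_lineRestrict (a v : σ → ℝ) (q : MvPolynomial σ ℝ) :
    (lineRestrict a v q).derivative = ∑ i, v i • lineRestrict a v (pderiv i q) := by
  classical
  induction q using MvPolynomial.induction_on with
  | C r => simp [lineRestrict]
  | add p q hp hq => simp only [map_add, hp, hq, smul_add, Finset.sum_add_distrib]
  | mul_X p j hp =>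
    have hX : (lineRestrict a v (X j)).derivative = Polynomial.C (v j) := by
      simp [lineRestrict]
    have hsingle : ∑ i, v i • lineRestrict a v (p * pderiv i (X j)) =
        lineRestrict a v p * Polynomial.C (v j) := by
      rw [Finset.sum_eq_single j (fun i _ hij => by simp [pderiv_X_of_ne hij.symm]) (by simp)]
      rw [pderiv_X_self, mul_one, Polynomial.smul_eq_C_mul, mul_comm]
    simp only [pderiv_mul, map_mul, map_add, smul_add, Finset.sum_add_distrib,
      Polynomial.derivative_mul, hp, hX, Finset.sum_mul, smul_mul_assoc] at hsingle ⊢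
    rw [hsingle]

lemma eval_derivative_derivative_lineRestrict (a v : σ → ℝ) (q : MvPolynomial σ ℝ) (t : ℝ) :
    (lineRestrict a v q).derivative.derivative.eval t =
      v ⬝ᵥ (hessian q).map (eval (a + t • v)) *ᵥ v := by
  simp only [derivative_lineRestrict, Polynomial.derivative_sum, Polynomial.derivative_smul,
    Polynomial.eval_finsetSum, Polynomial.eval_smul, eval_lineRestrict, smul_eq_mul, dotProduct,
    mulVec, hessian, map_apply, of_apply, mul_comm (v _) (eval _ _),
    fun i j => pderiv_pderiv_comm i j q]

lemma dotProduct_hessian_mulVec (a v : σ → ℝ) (q : MvPolynomial σ ℝ) :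
    v ⬝ᵥ (hessian q).map (eval a) *ᵥ v = 2 * (lineRestrict a v q).coeff 2 := by
  have h := eval_derivative_derivative_lineRestrict a v q 0
  rw [zero_smul, add_zero, ← Polynomial.coeff_zero_eq_eval_zero, Polynomial.coeff_derivative,
    Polynomial.coeff_derivative] at h
  rw [← h]
  norm_num [mul_comm]

omit [Fintype σ] in
lemma posSemidef_hessian [Finite σ] {q : MvPolynomial σ ℝ}
    (hq : ConvexOn ℝ Set.univ fun x => eval x q) (x : σ → ℝ) :
    ((hessian q).map (eval x)).PosSemidef := by
  cases nonempty_fintype σ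
  refine .of_dotProduct_mulVec_nonneg (isHermitian_map_hessian q _) fun v => ?_
  have hline : ConvexOn ℝ Set.univ fun t => (lineRestrict x v q).eval t := by
    simp only [eval_lineRestrict]
    exact (hq.translate_right x).comp_linearMap (LinearMap.toSpanSingleton ℝ _ v)
  have hderiv : deriv (fun t => (lineRestrict x v q).eval t) =
      fun t => (lineRestrict x v q).derivative.eval t := funext fun t => Polynomial.deriv _
  have hmono := hline.monotoneOn_deriv fun t _ => (lineRestrict x v q).differentiableAt
  rw [monotoneOn_univ, hderiv] at hmono
  have h := hmono.deriv_nonneg (x := 0)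
  rwa [Polynomial.deriv, eval_derivative_derivative_lineRestrict, zero_smul, add_zero] at h

omit [Fintype σ] in
lemma posDef_hessian [Finite σ] {q : MvPolynomial σ ℝ} {a : σ → ℝ}
    (hq : HasNondegenerateMinAt q a) :
    ((hessian q).map (eval a)).PosDef := by
  cases nonempty_fintype σ
  refine .of_dotProduct_mulVec_pos (isHermitian_map_hessian q _) fun v hv => ?_
  rw [star_trivial, dotProduct_hessian_mulVec]
  exact mul_pos two_pos (hq.coeff_two_pos v hv)

end Hessian

section Taylor

open MvPolynomial Matrix

variable {σ : Type*}

lemma exists_eval_eq_integral [Finite σ] (q : MvPolynomial σ ℝ) :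
    ∃ p : MvPolynomial σ ℝ, ∀ x, eval x p = ∫ t in (0 : ℝ)..1, (1 - t) * eval (t • x) q := by
  cases nonempty_fintype σ
  induction q using MvPolynomial.induction_on' with
  | monomial α r =>
    refine ⟨monomial α (r * ∫ t in (0 : ℝ)..1, (1 - t) * t ^ ∑ i, α i), fun x => ?_⟩
    rw [eval_monomial, Finsupp.prod_fintype _ _ (by simp), mul_right_comm,
      ← intervalIntegral.integral_const_mul]
    congr 1
    ext t
    rw [eval_monomial, Finsupp.prod_fintype _ _ (by simp)]
    simp only [Pi.smul_apply, smul_eq_mul, mul_pow, Finset.prod_mul_distrib,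
      Finset.prod_pow_eq_pow_sum]
    ring
  | add p q hp hq =>
    obtain ⟨P, hP⟩ := hp
    obtain ⟨Q, hQ⟩ := hq
    refine ⟨P + Q, fun x => ?_⟩
    have hcont (r : MvPolynomial σ ℝ) : Continuous fun t : ℝ => (1 - t) * eval (t • x) r :=
      (by fun_prop : Continuous fun t : ℝ => 1 - t).mul
        ((continuous_eval r).comp (by fun_prop))
    rw [map_add, hP, hQ, ← intervalIntegral.integral_add
      ((hcont p).intervalIntegrable _ _) ((hcont q).intervalIntegrable _ _)]
    simp only [map_add, mul_add]

variable [Fintype σ]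

lemma eval_sub_eq_integral_hessian (q : MvPolynomial σ ℝ) (x : σ → ℝ) :
    eval x q - eval 0 q - (lineRestrict 0 x q).coeff 1 =
      ∫ t in (0 : ℝ)..1, (1 - t) * (x ⬝ᵥ (hessian q).map (eval (t • x)) *ᵥ x) := by
  set P := lineRestrict 0 x q with hP
  have hderiv (t : ℝ) : HasDerivAt (fun t => (1 - t) * P.derivative.eval t + P.eval t)
      ((1 - t) * P.derivative.derivative.eval t) t := by
    refine ((((hasDerivAt_id t).const_sub 1).mul (P.derivative.hasDerivAt t)).add
      (P.hasDerivAt t)).congr_deriv ?_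
    rw [id_eq]
    ring
  have hint := intervalIntegral.integral_eq_sub_of_hasDerivAt (fun t _ => hderiv t)
    (Continuous.intervalIntegrable (by fun_prop) 0 1)
  have h0 : P.derivative.eval 0 = P.coeff 1 := by
    simp [← Polynomial.coeff_zero_eq_eval_zero, Polynomial.coeff_derivative]
  simp only [hP, eval_derivative_derivative_lineRestrict, zero_add] at hint
  rw [hint, ← hP, h0, hP, eval_lineRestrict, eval_lineRestrict]
  simp only [zero_add, one_smul, zero_smul]
  ring

omit [Fintype σ] in
lemma HasNondegenerateMinAt.coeff_one_eq_zero {q : MvPolynomial σ ℝ} {a : σ → ℝ}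
    (hq : HasNondegenerateMinAt q a) (v : σ → ℝ) : (lineRestrict a v q).coeff 1 = 0 := by
  have hmin : IsLocalMin (fun t => (lineRestrict a v q).eval t) 0 := by
    refine Filter.Eventually.of_forall fun t => ?_
    simp only [eval_lineRestrict, zero_smul, add_zero, hq.eval_eq_zero]
    exact hq.eval_nonneg _
  have h := hmin.hasDerivAt_eq_zero ((lineRestrict a v q).hasDerivAt 0)
  simpa [← Polynomial.coeff_zero_eq_eval_zero, Polynomial.coeff_derivative] using h

lemma map_dotProduct_mulVec {R S : Type*} [CommSemiring R] [CommSemiring S] (f : R →+* S)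
    (v w : σ → R) (M : Matrix σ σ R) :
    f (v ⬝ᵥ M *ᵥ w) = (f ∘ v) ⬝ᵥ M.map f *ᵥ (f ∘ w) := by
  rw [RingHom.map_dotProduct]
  congr 1
  exact funext fun i => RingHom.map_mulVec f M w i

lemma dotProduct_map_mulVec_eq_integral {J : MvPolynomial σ ℝ → MvPolynomial σ ℝ}
    (hJ : ∀ q x, eval x (J q) = ∫ t in (0 : ℝ)..1, (1 - t) * eval (t • x) q)
    (M : Matrix σ σ (MvPolynomial σ ℝ)) (x y : σ → ℝ) :
    y ⬝ᵥ (M.map J).map (eval x) *ᵥ y =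
      ∫ t in (0 : ℝ)..1, (1 - t) * (y ⬝ᵥ M.map (eval (t • x)) *ᵥ y) := by
  have hcont (r : MvPolynomial σ ℝ) : Continuous fun t : ℝ => eval (t • x) r :=
    (continuous_eval r).comp (by fun_prop)
  simp only [dotProduct, mulVec, Finset.mul_sum, map_apply, hJ]
  rw [intervalIntegral.integral_finsetSum fun i _ => Continuous.intervalIntegrable
    (continuous_finsetSum _ fun j _ => by fun_prop) _ _]
  refine Finset.sum_congr rfl fun i _ => ?_
  rw [intervalIntegral.integral_finsetSum fun j _ => Continuous.intervalIntegrable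
    (by fun_prop) _ _]
  refine Finset.sum_congr rfl fun j _ => ?_
  rw [← intervalIntegral.integral_mul_const, ← intervalIntegral.integral_const_mul]
  congr 1
  ext t
  ring

theorem HasNondegenerateMinAt.exists_posDef_matrix {q : MvPolynomial σ ℝ}
    (hq : HasNondegenerateMinAt q 0) :
    ∃ A : Matrix σ σ (MvPolynomial σ ℝ), (∀ x, (A.map (eval x)).PosDef) ∧
      X ⬝ᵥ A *ᵥ X = q := by
  choose J hJ using exists_eval_eq_integral (σ := σ)
  have hform := dotProduct_map_mulVec_eq_integral hJ (hessian q)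
  refine ⟨(hessian q).map J, fun x => .of_dotProduct_mulVec_pos
    (isHermitian_map_hessian q fun r => eval x (J r)) fun y hy => ?_,
    MvPolynomial.funext fun x => ?_⟩
  · rw [star_trivial, hform]
    refine intervalIntegral.integral_pos zero_lt_one ?_ (fun t ht => ?_) ⟨0, by simp, ?_⟩
    · have hcont (r : MvPolynomial σ ℝ) : Continuous fun t : ℝ => eval (t • x) r :=
        (continuous_eval r).comp (by fun_prop)
      simp only [dotProduct, mulVec, map_apply]
      fun_prop
    · exact mul_nonneg (sub_nonneg.2 ht.2)
        ((posSemidef_hessian hq.convexOn _).dotProduct_mulVec_nonneg y)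
    · rw [sub_zero, one_mul, zero_smul]
      exact (posDef_hessian hq).dotProduct_mulVec_pos hy
  · have hX : eval x ∘ X = x := funext fun i => eval_X i
    rw [map_dotProduct_mulVec, hX, hform, ← eval_sub_eq_integral_hessian, hq.eval_eq_zero,
      hq.coeff_one_eq_zero, sub_zero, sub_zero]

end Taylor

section PartitionOfUnity

variable {A : Type*} [CommRing A]

lemma sum_pi_prod_mul {ι : Type*} [Fintype ι] [DecidableEq ι] {κ : ι → Type*} [∀ i, Fintype (κ i)]
    {f : ∀ i, κ i → A} (hf : ∀ i, ∑ k, f i k = 1) (i : ι) (g : κ i → A) :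
    ∑ p : ∀ j, κ j, (∏ j, f j (p j)) * g (p i) = ∑ k, f i k * g k := by
  let f' : ∀ j, κ j → A := Function.update f i fun k => f i k * g k
  have hfi : f' i = fun k => f i k * g k := Function.update_self ..
  have hfj {j : ι} (hj : j ∈ Finset.univ.erase i) : f' j = f j :=
    Function.update_of_ne (Finset.ne_of_mem_erase hj) ..
  have hprod (p : ∀ j, κ j) : (∏ j, f j (p j)) * g (p i) = ∏ j, f' j (p j) := by
    rw [← Finset.mul_prod_erase _ _ (Finset.mem_univ i), mul_right_comm,
      ← Finset.mul_prod_erase _ (fun j => f' j (p j)) (Finset.mem_univ i), hfi]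
    exact congrArg _ (Finset.prod_congr rfl fun j hj => by rw [hfj hj])
  simp_rw [hprod]
  rw [← Fintype.prod_sum, ← Finset.mul_prod_erase _ _ (Finset.mem_univ i), hfi,
    Finset.prod_eq_one fun j hj => by rw [hfj hj, hf], mul_one]

variable [Algebra ℝ A]

lemma sum_aeval_bernsteinPolynomial_mul_sub_sq (u : A) {d : ℕ} (hd : d ≠ 0) :
    ∑ k ∈ Finset.range (d + 1), Polynomial.aeval u (bernsteinPolynomial ℝ d k)
      * (u - algebraMap ℝ A (k / d)) ^ 2 = (d : ℝ)⁻¹ • (u * (1 - u)) := by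
  have hvar := congrArg (Polynomial.aeval u) (bernsteinPolynomial.variance ℝ d)
  simp only [map_sum, map_mul, map_pow, map_sub, map_nsmul, map_natCast, map_one,
    Polynomial.aeval_X] at hvar
  have hterm (k : ℕ) : u - algebraMap ℝ A (k / d) = (d : ℝ)⁻¹ • (d • u - (k : A)) := by
    rw [smul_sub, ← Nat.cast_smul_eq_nsmul ℝ, inv_smul_smul₀ (by exact_mod_cast hd),
      Algebra.smul_def, ← map_natCast (algebraMap ℝ A) k, ← map_mul, inv_mul_eq_div]
  simp_rw [hterm, smul_pow, mul_smul_comm, ← Finset.smul_sum, mul_comm (Polynomial.aeval u _)]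
  rw [hvar, ← Nat.cast_smul_eq_nsmul ℝ, smul_mul_assoc, smul_smul]
  congr 1
  field_simp

variable {T : Subsemiring A} (hT : ∀ x, x * x ∈ T)

include hT

lemma exists_partition_sub_sq_of_mem_unitInterval {u : A} (hu : u ∈ T) (hu' : 1 - u ∈ T) {ε : ℝ}
    (hε : 0 < ε) : ∃ (d : ℕ) (b : Fin d → A) (a : Fin d → ℝ), (∀ k, b k ∈ T) ∧
      (∀ k, a k ∈ Set.Icc 0 1) ∧ ∑ k, b k = 1 ∧
      algebraMap ℝ A ε - ∑ k, b k * (u - algebraMap ℝ A (a k)) ^ 2 ∈ T := by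
  obtain ⟨d, hd⟩ := exists_nat_gt ε⁻¹
  have hd0 : (0 : ℝ) < d := (inv_pos.2 hε).trans hd
  refine ⟨d + 1, fun k => Polynomial.aeval u (bernsteinPolynomial ℝ d k), fun k => k / d,
    fun k => ?_, fun k => ⟨by positivity, (div_le_one hd0).2 ?_⟩, ?_, ?_⟩
  · simp only [bernsteinPolynomial, map_mul, map_natCast, map_pow, map_sub, map_one,
      Polynomial.aeval_X]
    exact T.mul_mem (T.mul_mem (natCast_mem T _) (pow_mem hu _)) (pow_mem hu' _)
  · exact_mod_cast Nat.lt_succ_iff.1 k.2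
  · rw [Fin.sum_univ_eq_sum_range fun k => Polynomial.aeval u (bernsteinPolynomial ℝ d k),
      ← map_sum, bernsteinPolynomial.sum, map_one]
  · rw [Fin.sum_univ_eq_sum_range fun k => Polynomial.aeval u (bernsteinPolynomial ℝ d k)
        * (u - algebraMap ℝ A (k / d)) ^ 2,
      sum_aeval_bernsteinPolynomial_mul_sub_sq u (by exact_mod_cast hd0.ne')]
    have hεd : 0 ≤ ε - (d : ℝ)⁻¹ := sub_nonneg.2 (inv_le_of_inv_le₀ hε hd.le)
    have hu1 : 1 - u * (1 - u) ∈ T := by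
      convert T.add_mem hu' (hT u) using 1
      ring
    convert T.add_mem (algebraMap_mem_of_nonneg hT hεd)
      (smul_mem_of_nonneg hT (inv_nonneg.2 hd0.le) hu1) using 1
    rw [smul_sub, ← Algebra.algebraMap_eq_smul_one, map_sub]
    abel

lemma exists_partition_sub_sq {x : A} {R : ℝ} (hR : 0 < R) (hx : algebraMap ℝ A R - x ∈ T)
    (hx' : algebraMap ℝ A R + x ∈ T) {ε : ℝ} (hε : 0 < ε) :
    ∃ (d : ℕ) (b : Fin d → A) (a : Fin d → ℝ), (∀ k, b k ∈ T) ∧ (∀ k, a k ∈ Set.Icc (-R) R) ∧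
      ∑ k, b k = 1 ∧ algebraMap ℝ A ε - ∑ k, b k * (x - algebraMap ℝ A (a k)) ^ 2 ∈ T := by
  obtain ⟨u, hu, rfl⟩ : ∃ u ∈ T, x = (2 * R) • u - algebraMap ℝ A R :=
    ⟨(2 * R)⁻¹ • (algebraMap ℝ A R + x), smul_mem_of_nonneg hT (by positivity) hx', by
      rw [smul_inv_smul₀ (by positivity), add_sub_cancel_left]⟩
  have hu' : 1 - u ∈ T := by
    convert smul_mem_of_nonneg hT (r := (2 * R)⁻¹) (by positivity) hx using 1
    rw [eq_inv_smul_iff₀ (by positivity), smul_sub, ← Algebra.algebraMap_eq_smul_one, two_mul,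
      map_add]
    abel
  obtain ⟨d, b, a, hb, ha, hone, hsum⟩ := exists_partition_sub_sq_of_mem_unitInterval hT hu hu'
    (ε := ε / (2 * R) ^ 2) (by positivity)
  refine ⟨d, b, fun k => 2 * R * a k - R, hb, fun k => ?_, hone, ?_⟩
  · obtain ⟨h0, h1⟩ := ha k
    constructor <;> nlinarith
  · convert smul_mem_of_nonneg hT (sq_nonneg (2 * R)) hsum using 1
    rw [smul_sub, Finset.smul_sum, Algebra.smul_def _ (algebraMap ℝ A _), ← map_mul,
      mul_div_cancel₀ _ (by positivity)]
    congr 1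
    refine Finset.sum_congr rfl fun k _ => ?_
    simp only [Algebra.smul_def, map_mul, map_sub, map_pow]
    ring

end PartitionOfUnity

section SquaredDistance

open MvPolynomial Matrix

variable {σ : Type u} [Fintype σ]

/-- The squared distance from a point `a`, as a polynomial. -/
noncomputable def sqDist (a : σ → ℝ) : MvPolynomial σ ℝ := ∑ i, (X i - C (a i)) ^ 2

lemma exists_pos_bound {A : Type*} [CommRing A] [Algebra ℝ A] {T : Subsemiring A}
    {hT : ∀ x, x * x ∈ T} (hbdd : boundedSubalgebra T hT = ⊤) (a : A) :
    ∃ R : ℝ, 0 < R ∧ algebraMap ℝ A R - a ∈ T ∧ algebraMap ℝ A R + a ∈ T := by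
  obtain ⟨M, h, h'⟩ : a ∈ boundedSubalgebra T hT := hbdd ▸ Algebra.mem_top
  have hM : algebraMap ℝ A (|M| + 1 - M) ∈ T :=
    algebraMap_mem_of_nonneg hT (by linarith [le_abs_self M])
  rw [map_sub] at hM
  refine ⟨|M| + 1, by positivity, ?_, ?_⟩
  · convert T.add_mem hM h using 1
    ring
  · convert T.add_mem hM h' using 1
    ring

variable {T : Subsemiring (MvPolynomial σ ℝ)} {hT : ∀ x, x * x ∈ T}

lemma exists_partition_sqDist (hbdd : boundedSubalgebra T hT = ⊤) :
    ∃ R : σ → ℝ, ∀ ε > 0, ∃ (κ : Type u) (_ : Fintype κ) (b : κ → MvPolynomial σ ℝ) (a : κ → σ → ℝ),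
      (∀ k, b k ∈ T) ∧ (∀ k, a k ∈ Set.Icc (-R) R) ∧ ∑ k, b k = 1 ∧
      C ε - ∑ k, b k * sqDist (a k) ∈ T := by
  classical
  choose R hR hR₁ hR₂ using fun i : σ => exists_pos_bound hbdd (X i)
  refine ⟨R, fun ε hε => ?_⟩
  have hε' : 0 < ε / (Fintype.card σ + 1) := by positivity
  choose d b a hb ha hone hsum using fun i => exists_partition_sub_sq hT (hR i) (hR₁ i) (hR₂ i) hε'
  refine ⟨∀ i, Fin (d i), inferInstance, fun p => ∏ i, b i (p i), fun p i => a i (p i),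
    fun p => prod_mem fun i _ => hb i (p i),
    fun p => ⟨fun i => (ha i (p i)).1, fun i => (ha i (p i)).2⟩, ?_, ?_⟩
  · rw [← Fintype.prod_sum, Finset.prod_eq_one fun i _ => hone i]
  · have hmarginal : ∑ p : ∀ i, Fin (d i), (∏ i, b i (p i)) * sqDist (fun i => a i (p i))
        = ∑ i, ∑ k, b i k * (X i - C (a i k)) ^ 2 := by
      simp_rw [sqDist, Finset.mul_sum]
      rw [Finset.sum_comm]
      exact Finset.sum_congr rfl fun i _ => sum_pi_prod_mul hone i fun k => (X i - C (a i k)) ^ 2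
    have hslack : C (ε / (Fintype.card σ + 1)) ∈ T := algebraMap_mem_of_nonneg hT hε'.le
    have hε_eq : ε = Fintype.card σ • (ε / (Fintype.card σ + 1)) + ε / (Fintype.card σ + 1) := by
      rw [nsmul_eq_mul]
      field_simp
    convert T.add_mem (sum_mem fun i (_ : i ∈ Finset.univ) => hsum i) hslack using 1
    rw [hmarginal, Finset.sum_sub_distrib, Finset.sum_const, Finset.card_univ, ← map_nsmul,
      algebraMap_eq, sub_add_eq_add_sub, ← C_add, ← hε_eq]

lemma exists_sub_C_eval_sq_le (hbdd : boundedSubalgebra T hT = ⊤) {K : Set (σ → ℝ)}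
    (hK : IsCompact K) (q : MvPolynomial σ ℝ) :
    ∃ L : ℝ, 0 ≤ L ∧ ∀ a ∈ K, C L * sqDist a - (q - C (eval a q)) ^ 2 ∈ T := by
  have hsq (x : MvPolynomial σ ℝ) : x ^ 2 ∈ T := sq x ▸ hT x
  have hC {r : ℝ} (hr : 0 ≤ r) : C r ∈ T := algebraMap_mem_of_nonneg hT hr
  have hdist (a : σ → ℝ) : sqDist a ∈ T := sum_mem fun i _ => hsq _
  induction q using MvPolynomial.induction_on with
  | C r => exact ⟨0, le_rfl, fun a _ => by simp⟩
  | add p q hp hq =>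
    obtain ⟨L, hL, hp⟩ := hp
    obtain ⟨M, hM, hq⟩ := hq
    refine ⟨2 * L + 2 * M, by positivity, fun a ha => ?_⟩
    convert T.add_mem (T.mul_mem (hC zero_le_two) (T.add_mem (hp a ha) (hq a ha)))
      (hsq ((p - C (eval a p)) - (q - C (eval a q)))) using 1
    simp only [map_add, map_mul, map_ofNat]
    ring
  | mul_X p j hp =>
    obtain ⟨L, hL, hp⟩ := hp
    obtain ⟨R, hR, hX, -⟩ := exists_pos_bound hbdd (X j ^ 2 : MvPolynomial σ ℝ)
    obtain ⟨B, hB⟩ := hK.exists_bound_of_continuousOn (p.continuous_eval).continuousOn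
    have hsingle (a : σ → ℝ) : sqDist a - (X j - C (a j)) ^ 2 ∈ T := by
      classical
      rw [sqDist, ← Finset.add_sum_erase _ _ (Finset.mem_univ j), add_sub_cancel_left]
      exact sum_mem fun i _ => hsq _
    refine ⟨2 * R * L + 2 * B ^ 2, by positivity, fun a ha => ?_⟩
    have hB' : 0 ≤ B ^ 2 - eval a p ^ 2 := by
      rw [sub_nonneg, sq_le_sq, ← Real.norm_eq_abs]
      exact (hB a ha).trans (le_abs_self B)
    have h₁ := T.mul_mem (hsq (p - C (eval a p))) hX
    have h₂ := T.mul_mem (hC hR.le) (hp a ha)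
    have h₃ := T.mul_mem (hsq (C (eval a p))) (hsingle a)
    have h₄ := T.mul_mem (hC hB') (hdist a)
    convert T.add_mem (T.mul_mem (hC zero_le_two) (T.add_mem (T.add_mem h₁ h₂) (T.add_mem h₃ h₄)))
      (hsq ((p - C (eval a p)) * X j - C (eval a p) * (X j - C (a j)))) using 1
    simp only [map_add, map_sub, map_mul, map_pow, map_ofNat, algebraMap_eq, eval_X]
    ring

end SquaredDistance

section PositiveDefinite

open MvPolynomial Matrix

variable {ι : Type*} [Fintype ι]

lemma isCompact_setOf_dotProduct_self_eq_one : IsCompact {y : ι → ℝ | y ⬝ᵥ y = 1} := by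
  refine (isCompact_Icc (a := -1) (b := 1)).of_isClosed_subset
    (isClosed_eq (by fun_prop) continuous_const) fun y (hy : y ⬝ᵥ y = 1) => ?_
  have hle (i : ι) : |y i| ≤ 1 := by
    rw [← sq_le_one_iff_abs_le_one, sq, ← hy]
    exact Finset.single_le_sum (f := fun i => y i * y i) (fun i _ => mul_self_nonneg _)
      (Finset.mem_univ i)
  exact ⟨fun i => (abs_le.1 (hle i)).1, fun i => (abs_le.1 (hle i)).2⟩

omit [Fintype ι] in
lemma exists_pos_posSemidef_sub [Finite ι] [DecidableEq ι] {Y : Type*} [TopologicalSpace Y]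
    {M : Y → Matrix ι ι ℝ} (hM : Continuous M) {K : Set Y} (hK : IsCompact K)
    (hpos : ∀ x ∈ K, (M x).PosDef) : ∃ δ : ℝ, 0 < δ ∧ ∀ x ∈ K, (M x - δ • 1).PosSemidef := by
  cases nonempty_fintype ι
  obtain ⟨δ, hδ, hle⟩ := (hK.prod isCompact_setOf_dotProduct_self_eq_one).exists_forall_le'
    (f := fun z : Y × (ι → ℝ) => z.2 ⬝ᵥ M z.1 *ᵥ z.2) (by fun_prop) (a := 0)
    fun z hz => (hpos z.1 hz.1).dotProduct_mulVec_pos fun h0 => by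
      simpa [h0] using hz.2
  refine ⟨δ, hδ, fun x hx => .of_dotProduct_mulVec_nonneg
    ((hpos x hx).isHermitian.sub (isHermitian_one.smul (.all δ))) fun y => ?_⟩
  rw [star_trivial, sub_mulVec, smul_mulVec, one_mulVec, dotProduct_sub, dotProduct_smul,
    smul_eq_mul, sub_nonneg]
  rcases eq_or_ne y 0 with rfl | hy
  · simp
  have hyy : 0 < y ⬝ᵥ y := by simpa using dotProduct_star_self_pos_iff.2 hy
  have hunit : ((√(y ⬝ᵥ y))⁻¹ • y) ⬝ᵥ ((√(y ⬝ᵥ y))⁻¹ • y) = 1 := by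
    simp only [smul_dotProduct, dotProduct_smul, smul_eq_mul]
    rw [← mul_assoc, ← mul_inv, Real.mul_self_sqrt hyy.le, inv_mul_cancel₀ hyy.ne']
  have h := hle (x, _) ⟨hx, hunit⟩
  simp only [mulVec_smul, smul_dotProduct, dotProduct_smul, smul_eq_mul] at h
  rwa [← mul_assoc, ← mul_inv, Real.mul_self_sqrt hyy.le, le_inv_mul_iff₀ hyy, mul_comm] at h

variable {σ : Type*} {T : Subsemiring (MvPolynomial σ ℝ)}

lemma dotProduct_map_C_mulVec_mem (hT : ∀ x, x * x ∈ T) {M : Matrix ι ι ℝ} (hM : M.PosSemidef)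
    (w : ι → MvPolynomial σ ℝ) : w ⬝ᵥ M.map C *ᵥ w ∈ T := by
  obtain ⟨r, v, rfl⟩ := posSemidef_iff_eq_sum_vecMulVec.1 hM
  have hmap : (∑ l, vecMulVec (v l) (star (v l))).map (C : ℝ → MvPolynomial σ ℝ)
      = ∑ l, vecMulVec (C ∘ v l) (C ∘ v l) := by
    ext i j
    simp [Matrix.sum_apply, vecMulVec_apply]
  rw [hmap, sum_mulVec, dotProduct_sum]
  refine sum_mem fun l _ => ?_
  rw [vecMulVec_mulVec, op_smul_eq_smul, dotProduct_smul, smul_eq_mul, dotProduct_comm w]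
  exact hT _

end PositiveDefinite

section MatrixPositivity

open MvPolynomial Matrix

variable {ι σ : Type*} [Fintype ι] [Fintype σ] {T : Subsemiring (MvPolynomial σ ℝ)}
  {hT : ∀ x, x * x ∈ T} {K : Set (σ → ℝ)}

lemma exists_mul_sub_C_eval_mul_mem (hbdd : boundedSubalgebra T hT = ⊤) (hK : IsCompact K)
    (q : MvPolynomial σ ℝ) {η : ℝ} (hη : 0 < η) :
    ∃ L : ℝ, 0 ≤ L ∧ ∀ a ∈ K, ∀ u v : MvPolynomial σ ℝ,
      u * (q - C (eval a q)) * v + C η * u ^ 2 + C L * sqDist a * v ^ 2 ∈ T := by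
  obtain ⟨L, hL, hq⟩ := exists_sub_C_eval_sq_le hbdd hK q
  refine ⟨(4 * η)⁻¹ * L, by positivity, fun a ha u v => ?_⟩
  have hscale : C (4 * η)⁻¹ ∈ T := algebraMap_mem_of_nonneg hT (by positivity)
  have hsq := hT (C (2 * η) * u + (q - C (eval a q)) * v)
  convert T.mul_mem hscale (T.add_mem hsq (T.mul_mem (hq a ha) (hT v))) using 1
  have h₁ : C (4 * η)⁻¹ * (4 * C η) = (1 : MvPolynomial σ ℝ) := by
    rw [← map_ofNat C 4, ← C_mul, ← C_mul, inv_mul_cancel₀ (by positivity), C_1]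
  simp only [map_mul, map_ofNat] at h₁ ⊢
  linear_combination -(u * (q - C (eval a q)) * v + C η * u ^ 2) * h₁

omit [Fintype σ] in
lemma sum_sum_mul_mul_add_sq {R : Type*} [CommRing R] (M : Matrix ι ι R) (w : ι → R) (c s : R) :
    ∑ i, ∑ j, (w i * M i j * w j + c * w i ^ 2 + s * w j ^ 2) =
      w ⬝ᵥ M *ᵥ w + Fintype.card ι * (c + s) * (w ⬝ᵥ w) := by
  simp only [dotProduct, mulVec, Finset.mul_sum, Finset.sum_add_distrib, Finset.sum_const,
    Finset.card_univ, nsmul_eq_mul, mul_add, add_mul, mul_assoc, add_assoc, sq]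

lemma exists_dotProduct_sub_map_C_eval_mem (hbdd : boundedSubalgebra T hT = ⊤) (hK : IsCompact K)
    (A : Matrix ι ι (MvPolynomial σ ℝ)) {η : ℝ} (hη : 0 < η) :
    ∃ L : ℝ, 0 ≤ L ∧ ∀ a ∈ K, ∀ w : ι → MvPolynomial σ ℝ,
      w ⬝ᵥ (A - (A.map (eval a)).map C) *ᵥ w + (C η + C L * sqDist a) * (w ⬝ᵥ w) ∈ T := by
  have hη' : 0 < η / (Fintype.card ι + 1) := by positivity
  choose L hL hmem using fun i j => exists_mul_sub_C_eval_mul_mem hbdd hK (A i j) hη'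
  have hle (i j : ι) : L i j ≤ ∑ i, ∑ j, L i j :=
    (Finset.single_le_sum (fun j _ => hL i j) (Finset.mem_univ j)).trans
      (Finset.single_le_sum (f := fun i => ∑ j, L i j)
        (fun i _ => Finset.sum_nonneg fun j _ => hL i j) (Finset.mem_univ i))
  generalize ∑ i, ∑ j, L i j = M at hle
  refine ⟨Fintype.card ι * |M|, by positivity, fun a ha w => ?_⟩
  have hdist : sqDist a ∈ T := sum_mem fun i _ => sq (X i - C (a i)) ▸ hT _
  let E : Matrix ι ι (MvPolynomial σ ℝ) := A - (A.map (eval a)).map C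
  have hE (i j : ι) : E i j = A i j - C (eval a (A i j)) := rfl
  have hpair (i j : ι) : w i * E i j * w j
      + C (η / (Fintype.card ι + 1)) * w i ^ 2 + C |M| * sqDist a * w j ^ 2 ∈ T := by
    have hslack : C (|M| - L i j) * sqDist a * w j ^ 2 ∈ T :=
      T.mul_mem (T.mul_mem (algebraMap_mem_of_nonneg hT
        (sub_nonneg.2 ((hle i j).trans (le_abs_self M)))) hdist) (sq (w j) ▸ hT _)
    convert T.add_mem (hmem i j a ha (w i) (w j)) hslack using 1
    rw [C_sub, hE]
    ring
  have hslack : C (η / (Fintype.card ι + 1)) * (w ⬝ᵥ w) ∈ T :=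
    T.mul_mem (algebraMap_mem_of_nonneg hT hη'.le) (sum_mem fun i _ => hT (w i))
  convert T.add_mem (sum_mem fun i (_ : i ∈ Finset.univ) => sum_mem fun j (_ : j ∈ Finset.univ) =>
    hpair i j) hslack using 1
  have hη_eq : (C η : MvPolynomial σ ℝ) =
      (Fintype.card ι : MvPolynomial σ ℝ) * C (η / (Fintype.card ι + 1)) +
        C (η / (Fintype.card ι + 1)) := by
    rw [← map_natCast C, ← C_mul, ← C_add]
    congr 1
    field_simp
  rw [sum_sum_mul_mul_add_sq, hη_eq, C_mul, map_natCast]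
  ring

lemma exists_dotProduct_add_sqDist_mem (hbdd : boundedSubalgebra T hT = ⊤) (hK : IsCompact K)
    {A : Matrix ι ι (MvPolynomial σ ℝ)} (hA : ∀ x ∈ K, (A.map (eval x)).PosDef) :
    ∃ δ L : ℝ, 0 < δ ∧ 0 ≤ L ∧ ∀ a ∈ K, ∀ w : ι → MvPolynomial σ ℝ,
      w ⬝ᵥ A *ᵥ w + (C L * sqDist a - C δ) * (w ⬝ᵥ w) ∈ T := by
  classical
  have hcont : Continuous fun x => A.map (eval x) :=
    continuous_matrix fun i j => continuous_eval (A i j)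
  obtain ⟨δ, hδ, hpos⟩ := exists_pos_posSemidef_sub hcont hK hA
  obtain ⟨L, hL, happrox⟩ := exists_dotProduct_sub_map_C_eval_mem hbdd hK A (half_pos hδ)
  refine ⟨δ / 2, L, half_pos hδ, hL, fun a ha w => ?_⟩
  convert T.add_mem (happrox a ha w) (dotProduct_map_C_mulVec_mem hT (hpos a ha) w) using 1
  have hmap : (A.map (eval a) - δ • (1 : Matrix ι ι ℝ)).map (C : ℝ → MvPolynomial σ ℝ) =
      (A.map (eval a)).map C -
        (C δ : MvPolynomial σ ℝ) • (1 : Matrix ι ι (MvPolynomial σ ℝ)) := by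
    ext1 i j
    simp [Matrix.one_apply, apply_ite (C : ℝ → MvPolynomial σ ℝ)]
  have hδ2 : (C δ : MvPolynomial σ ℝ) = C (δ / 2) + C (δ / 2) := by rw [← C_add, add_halves]
  rw [hmap, hδ2, sub_mulVec, sub_mulVec, smul_mulVec, one_mulVec, dotProduct_sub, dotProduct_sub,
    dotProduct_smul, smul_eq_mul]
  ring

omit [Fintype σ] in
theorem dotProduct_mulVec_mem_of_posDef [Finite σ] (hbdd : boundedSubalgebra T hT = ⊤)
    {A : Matrix ι ι (MvPolynomial σ ℝ)} (hA : ∀ x, (A.map (eval x)).PosDef)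
    (w : ι → MvPolynomial σ ℝ) : w ⬝ᵥ A *ᵥ w ∈ T := by
  cases nonempty_fintype σ
  have hC {r : ℝ} (hr : 0 ≤ r) : C r ∈ T := algebraMap_mem_of_nonneg hT hr
  have hw : w ⬝ᵥ w ∈ T := sum_mem fun i _ => hT (w i)
  obtain ⟨R, hR⟩ := exists_partition_sqDist hbdd
  obtain ⟨δ, L, hδ, hL, hlocal⟩ := exists_dotProduct_add_sqDist_mem hbdd
    (isCompact_Icc (a := -R) (b := R)) fun x _ => hA x
  obtain ⟨κ, _, b, a, hb, ha, hone, hsum⟩ := hR (δ / (L + 1)) (by positivity)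
  have hε : 0 ≤ δ - L * (δ / (L + 1)) := by
    rw [show δ - L * (δ / (L + 1)) = δ / (L + 1) by field_simp; ring]
    positivity
  have hmean : ∑ k, b k * (w ⬝ᵥ A *ᵥ w + (C L * sqDist (a k) - C δ) * (w ⬝ᵥ w))
      = w ⬝ᵥ A *ᵥ w + (C L * (∑ k, b k * sqDist (a k)) - C δ) * (w ⬝ᵥ w) := by
    have hterm (k : κ) : b k * (w ⬝ᵥ A *ᵥ w + (C L * sqDist (a k) - C δ) * (w ⬝ᵥ w))
        = b k * (w ⬝ᵥ A *ᵥ w - C δ * (w ⬝ᵥ w)) + b k * sqDist (a k) * (C L * (w ⬝ᵥ w)) := by ring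
    simp_rw [hterm, Finset.sum_add_distrib, ← Finset.sum_mul, hone]
    ring
  convert T.add_mem (T.add_mem
    (sum_mem fun k (_ : k ∈ Finset.univ) => T.mul_mem (hb k) (hlocal (a k) (ha k) w))
    (T.mul_mem (T.mul_mem (hC hL) hsum) hw)) (T.mul_mem (hC hε) hw) using 1
  rw [hmean, C_sub, C_mul]
  ring

end MatrixPositivity

section Representation

open MvPolynomial

lemma isSumSq_map {A B : Type*} [CommSemiring A] [CommSemiring B] (φ : A →+* B) {s : A}
    (hs : IsSumSq s) : IsSumSq (φ s) := by
  induction hs with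
  | zero => simpa only [map_zero] using IsSumSq.zero
  | sq_add a _ ih => simpa only [map_add, map_mul] using ih.sq_add (φ a)

lemma HasNondegenerateMinAt.eq_add_mul_of_adapted {σ : Type*} [Finite σ] [DecidableEq σ]
    {q : MvPolynomial σ ℝ} (hq : HasNondegenerateMinAt q 0)
    (hadapted : ∀ i v, v i ≠ 0 → rayDegree q 0 (Pi.single i 1) ≤ rayDegree q 0 v) (c : ℝ) :
    ∃ s t, IsSumSq s ∧ IsSumSq t ∧ q = s + t * (C c - q) := by
  cases nonempty_fintype σ
  have hsq (x : MvPolynomial σ ℝ) : x * x ∈ Subsemiring.sumSq (MvPolynomial σ ℝ) :=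
    Subsemiring.mem_sumSq.2 (IsSumSq.mul_self x)
  obtain ⟨A, hA, hAq⟩ := hq.exists_posDef_matrix
  have hT := fun x => le_adjoin hsq (C c - q) (hsq x)
  have hbdd := hq.boundedSubalgebra_eq_top hadapted hT (self_mem_adjoin hsq (C c - q))
  obtain ⟨s, hs, t, ht, hst⟩ := hAq ▸ dotProduct_mulVec_mem_of_posDef hbdd hA X
  exact ⟨s, t, Subsemiring.mem_sumSq.1 hs, Subsemiring.mem_sumSq.1 ht, hst⟩

theorem HasNondegenerateMinAt.eq_add_mul {σ : Type*} [Finite σ] {q : MvPolynomial σ ℝ}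
    {a : σ → ℝ} (hq : HasNondegenerateMinAt q a) (c : ℝ) :
    ∃ s t, IsSumSq s ∧ IsSumSq t ∧ q = s + t * (C c - q) := by
  classical
  cases nonempty_fintype σ
  obtain ⟨b, hb⟩ := exists_basis_rayDegree_le q a
  obtain ⟨ψ, hψ⟩ := exists_affinePullback_leftInverse a b
  have hadapted (i : σ) (y : σ → ℝ) (hy : y i ≠ 0) :
      rayDegree (ConvexSOS.affinePullback a b q) 0 (Pi.single i 1) ≤
        rayDegree (ConvexSOS.affinePullback a b q) 0 y := by
    simp only [rayDegree, lineRestrict_affinePullback, ← Module.Basis.equivFun_symm_apply]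
    rw [Basis.equivFun_symm_single]
    exact hb i _ (by rwa [← Module.Basis.equivFun_apply, LinearEquiv.apply_symm_apply])
  obtain ⟨s, t, hs, ht, hst⟩ := (hq.affinePullback b).eq_add_mul_of_adapted hadapted c
  refine ⟨ψ s, ψ t, isSumSq_map ψ.toRingHom hs, isSumSq_map ψ.toRingHom ht, ?_⟩
  rw [← algebraMap_eq] at hst ⊢
  simpa only [map_add, map_mul, map_sub, hψ, AlgHom.commutes] using congrArg ψ hst

end Representation

section SecondDerivative

open MvPolynomial

variable {σ : Type*} [Fintype σ]

lemma contDiff_eval (q : MvPolynomial σ ℝ) {k : WithTop ℕ∞} :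
    ContDiff ℝ k fun x : σ → ℝ => eval x q := by
  induction q using MvPolynomial.induction_on with
  | C r => simpa only [eval_C] using contDiff_const
  | add p q hp hq => simpa only [map_add] using hp.add hq
  | mul_X p j hp => simpa only [map_mul, eval_X] using hp.mul (contDiff_apply ℝ ℝ j)

omit [Fintype σ] in
lemma fderiv_eval [Finite σ] (q : MvPolynomial σ ℝ) (x v : σ → ℝ) :
    fderiv ℝ (fun x : σ → ℝ => eval x q) x v = (lineRestrict x v q).derivative.eval 0 := by
  cases nonempty_fintype σ
  have hline := (((contDiff_eval q (k := 1)).differentiable one_ne_zero) x).hasFDerivAt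
    |>.hasLineDerivAt v
  have hpoly := (lineRestrict x v q).hasDerivAt 0
  simp only [eval_lineRestrict] at hpoly
  exact HasDerivAt.unique hline hpoly

lemma iteratedFDeriv_two_eval (q : MvPolynomial σ ℝ) (x v : σ → ℝ) :
    iteratedFDeriv ℝ 2 (fun x : σ → ℝ => eval x q) x ![v, v] =
      2 * (lineRestrict x v q).coeff 2 := by
  have hdiff : DifferentiableAt ℝ (fderiv ℝ fun x : σ → ℝ => eval x q) x :=
    ((contDiff_eval q (k := 2)).fderiv_right (m := 1) (by norm_num)).differentiable one_ne_zero x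
  have hfderiv : (fun x => fderiv ℝ (fun x : σ → ℝ => eval x q) x v) =
      fun x => eval x (∑ i, v i • pderiv i q) := by
    ext x
    simp [fderiv_eval, derivative_lineRestrict, Polynomial.eval_finsetSum, eval_lineRestrict]
  have hsecond := congrArg (· v) (hdiff.hasFDerivAt.clm_apply (hasFDerivAt_const v x)).fderiv
  rw [hfderiv, fderiv_eval, map_sum] at hsecond
  simp only [map_smul, ← derivative_lineRestrict] at hsecond
  simp only [iteratedFDeriv_two_apply, Matrix.cons_val_zero, Matrix.cons_val_one]
  rw [← Polynomial.coeff_zero_eq_eval_zero, Polynomial.coeff_derivative,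
    Polynomial.coeff_derivative] at hsecond
  simp only [zero_add, Nat.cast_zero, Nat.cast_one, mul_one, one_add_one_eq_two,
    ContinuousLinearMap.comp_zero, ContinuousLinearMap.flip_apply] at hsecond
  rw [mul_comm, hsecond]

end SecondDerivative

section Lagrangian

open MvPolynomial

lemma isSumSq_C {σ : Type*} {r : ℝ} (hr : 0 ≤ r) : IsSumSq (C r : MvPolynomial σ ℝ) := by
  rw [← Real.mul_self_sqrt hr, C_mul]
  exact IsSumSq.mul_self _

lemma isSOS_of_isSumSq {n : ℕ} {q : MvPolynomial (Fin n) ℝ} (hq : IsSumSq q) : IsSOS q := by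
  induction hq with
  | zero => exact ⟨0, 0, by simp⟩
  | sq_add a _ ih =>
    obtain ⟨r, s, rfl⟩ := ih
    exact ⟨r + 1, Fin.cons a s, by simp [Fin.sum_univ_succ, pow_two]⟩

variable {σ ι : Type*} [Fintype ι]

/-- The Lagrangian `P + ∑ i, μ i • h i` of the program of minimizing `P` subject to `h i ≤ 0`, for
a fixed multiplier `μ`, as a polynomial in the primal variables. -/
noncomputable def lagrangian (P : MvPolynomial σ ℝ) (h : ι → MvPolynomial σ ℝ) (μ : ι → ℝ) :
    MvPolynomial σ ℝ :=
  P + ∑ i, C (μ i) * h i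

variable {P : MvPolynomial σ ℝ} {h : ι → MvPolynomial σ ℝ} {μ : ι → ℝ}

lemma eval_lagrangian (P : MvPolynomial σ ℝ) (h : ι → MvPolynomial σ ℝ) (μ : ι → ℝ) (x : σ → ℝ) :
    eval x (lagrangian P h μ) = eval x P + ∑ i, μ i * eval x (h i) := by
  simp only [lagrangian, map_add, map_sum, map_mul, eval_C]

lemma convexOn_eval_lagrangian (hP : ConvexOn ℝ Set.univ fun x => eval x P)
    (hh : ∀ i, ConvexOn ℝ Set.univ fun x => eval x (h i)) (hμ : ∀ i, 0 ≤ μ i) :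
    ConvexOn ℝ Set.univ fun x => eval x (lagrangian P h μ) := by
  simp only [eval_lagrangian]
  refine hP.add ?_
  have hsum : (fun x => ∑ i, μ i * eval x (h i)) = ∑ i, μ i • fun x => eval x (h i) := by
    ext x
    simp only [Finset.sum_apply, Pi.smul_apply, smul_eq_mul]
  rw [hsum]
  exact Finset.sum_induction _ (ConvexOn ℝ Set.univ) (fun _ _ => ConvexOn.add)
    (convexOn_const 0 convex_univ) fun i _ => (hh i).smul (hμ i)

lemma eval_lagrangian_le (hμ : ∀ i, 0 ≤ μ i) {x : σ → ℝ} (hx : ∀ i, eval x (h i) ≤ 0) :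
    eval x (lagrangian P h μ) ≤ eval x P := by
  rw [eval_lagrangian]
  exact add_le_of_nonpos_right
    (Finset.sum_nonpos fun i _ => mul_nonpos_of_nonneg_of_nonpos (hμ i) (hx i))

lemma eval_lagrangian_eq_of_isLeast (hμ : ∀ i, 0 ≤ μ i) {a : σ → ℝ}
    (ha : ∀ i, eval a (h i) ≤ 0) (hslack : eval a P ≤ eval a (lagrangian P h μ))
    (hmin : ∀ x, eval a (lagrangian P h μ) ≤ eval x (lagrangian P h μ)) {v : ℝ}
    (hv : IsLeast ((fun x => eval x P) '' {x | ∀ i, eval x (h i) ≤ 0}) v) :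
    eval a (lagrangian P h μ) = v := by
  refine le_antisymm ?_ ((hv.2 ⟨a, ha, rfl⟩).trans hslack)
  obtain ⟨x, hx, rfl⟩ := hv.1
  exact (hmin x).trans (eval_lagrangian_le hμ hx)

lemma convexOn_eval_sub_C {q : MvPolynomial σ ℝ} (hq : ConvexOn ℝ Set.univ fun x => eval x q)
    (c : ℝ) : ConvexOn ℝ Set.univ fun x => eval x (q - C c) := by
  simp only [RingHom.map_sub, eval_C]
  exact hq.sub (concaveOn_const c convex_univ)

lemma hasNondegenerateMinAt_sub_C [Fintype σ] {q : MvPolynomial σ ℝ}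
    (hq : ConvexOn ℝ Set.univ fun x => eval x q) {a : σ → ℝ} (hmin : ∀ x, eval a q ≤ eval x q)
    (hhess : ∀ v ≠ 0, 0 < iteratedFDeriv ℝ 2 (fun x => eval x q) a ![v, v]) :
    HasNondegenerateMinAt (q - C (eval a q)) a where
  convexOn := convexOn_eval_sub_C hq _
  eval_eq_zero := by rw [map_sub, eval_C, sub_self]
  eval_nonneg x := by
    rw [map_sub, eval_C]
    exact sub_nonneg.2 (hmin x)
  coeff_two_pos v hv := by
    have hpos := hhess v hv
    rw [iteratedFDeriv_two_eval] at hpos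
    rw [map_sub, ← algebraMap_eq, AlgHom.commutes, Polynomial.coeff_sub, Polynomial.algebraMap_eq,
      Polynomial.coeff_C_of_ne_zero two_ne_zero, sub_zero]
    exact pos_of_mul_pos_right hpos zero_le_two

theorem exists_eq_sub_sum_mul_of_hasNondegenerateMinAt [Finite σ] {w : ι → ℝ} {c v : ℝ}
    {a : σ → ℝ} (hw : ∀ i, 0 ≤ w i) (hP : P = lagrangian (C c) h w) (hμ : ∀ i, 0 ≤ μ i)
    (hmin : HasNondegenerateMinAt (lagrangian P h μ - C v) a) :
    ∃ (s : MvPolynomial σ ℝ) (τ : ι → MvPolynomial σ ℝ), IsSumSq s ∧ (∀ i, IsSumSq (τ i)) ∧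
      P - C v = s - ∑ i, τ i * h i := by
  obtain ⟨s, t, hs, ht, hst⟩ := hmin.eq_add_mul (c - v)
  refine ⟨s, fun i => C (μ i) + t * (C (w i) + C (μ i)), hs, fun i => (isSumSq_C (hμ i)).add
    (ht.mul ((isSumSq_C (hw i)).add (isSumSq_C (hμ i)))), ?_⟩
  have hsum : ∑ i, (C (μ i) + t * (C (w i) + C (μ i))) * h i =
      ∑ i, C (μ i) * h i + t * (∑ i, C (w i) * h i + ∑ i, C (μ i) * h i) := by
    simp only [add_mul, mul_assoc, Finset.sum_add_distrib, ← Finset.mul_sum]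
  rw [hsum]
  simp only [lagrangian, C_sub] at hst hP
  linear_combination hst - t * hP

theorem exists_eq_sub_sum_mul_of_saddlePoint [Fintype σ] {w : ι → ℝ} {c v : ℝ} {a : σ → ℝ}
    (hh : ∀ i, ConvexOn ℝ Set.univ fun x => eval x (h i)) (hw : ∀ i, 0 ≤ w i)
    (hP : P = lagrangian (C c) h w) (hμ : ∀ i, 0 ≤ μ i) (ha : ∀ i, eval a (h i) ≤ 0)
    (hslack : eval a P ≤ eval a (lagrangian P h μ))
    (hmin : ∀ x, eval a (lagrangian P h μ) ≤ eval x (lagrangian P h μ))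
    (hhess : ∀ y ≠ 0, 0 < iteratedFDeriv ℝ 2 (fun x => eval x (lagrangian P h μ)) a ![y, y])
    (hv : IsLeast ((fun x => eval x P) '' {x | ∀ i, eval x (h i) ≤ 0}) v) :
    ∃ (s : MvPolynomial σ ℝ) (τ : ι → MvPolynomial σ ℝ), IsSumSq s ∧ (∀ i, IsSumSq (τ i)) ∧
      P - C v = s - ∑ i, τ i * h i := by
  have hPconv : ConvexOn ℝ Set.univ fun x => eval x P := by
    rw [hP]
    refine convexOn_eval_lagrangian ?_ hh hw
    simpa only [eval_C] using convexOn_const c convex_univ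
  have hnondeg := hasNondegenerateMinAt_sub_C (convexOn_eval_lagrangian hPconv hh hμ) hmin hhess
  rw [eval_lagrangian_eq_of_isLeast hμ ha hslack hmin hv] at hnondeg
  exact exists_eq_sub_sum_mul_of_hasNondegenerateMinAt hw hP hμ hnondeg

end Lagrangian

section ScalarizedProgram

open MvPolynomial

variable {σ ι κ : Type*} {F : κ → MvPolynomial σ ℝ} {G : ι → MvPolynomial σ ℝ}

/-- The polynomials whose nonpositivity cuts out the feasible points that are no worse than `z` for
each objective: the constraints `G i`, then the differences `F j - F j (z)`. -/
noncomputable def sublevelConstraints (F : κ → MvPolynomial σ ℝ) (G : ι → MvPolynomial σ ℝ)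
    (z : σ → ℝ) : ι ⊕ κ → MvPolynomial σ ℝ :=
  Sum.elim G fun j => F j - C (eval z (F j))

lemma forall_eval_sublevelConstraints_nonpos_iff {z x : σ → ℝ} :
    (∀ k, eval x (sublevelConstraints F G z k) ≤ 0) ↔
      (∀ i, eval x (G i) ≤ 0) ∧ ∀ j, eval x (F j) ≤ eval z (F j) := by
  simp only [sublevelConstraints, Sum.forall, Sum.elim_inl, Sum.elim_inr, map_sub, eval_C,
    sub_nonpos]

lemma convexOn_eval_sublevelConstraints (hF : ∀ j, ConvexOn ℝ Set.univ fun x => eval x (F j))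
    (hG : ∀ i, ConvexOn ℝ Set.univ fun x => eval x (G i)) (z : σ → ℝ) (k : ι ⊕ κ) :
    ConvexOn ℝ Set.univ fun x => eval x (sublevelConstraints F G z k) := by
  rcases k with i | j
  exacts [hG i, convexOn_eval_sub_C (hF j) _]

variable [Fintype κ]

lemma isLeast_image_sublevelConstraints {w : κ → ℝ} {z : σ → ℝ} {v : ℝ}
    (hlow : ∀ x, (∀ i, eval x (G i) ≤ 0) → (∀ j, eval x (F j) ≤ eval z (F j)) →
      v ≤ ∑ j, w j * eval x (F j))
    (hmem : ∃ x, (∀ i, eval x (G i) ≤ 0) ∧ (∀ j, eval x (F j) ≤ eval z (F j)) ∧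
      ∑ j, w j * eval x (F j) = v) :
    IsLeast ((fun x => eval x (∑ j, C (w j) * F j)) ''
      {x | ∀ k, eval x (sublevelConstraints F G z k) ≤ 0}) v := by
  simp only [forall_eval_sublevelConstraints_nonpos_iff, map_sum, map_mul, eval_C]
  obtain ⟨x, hxG, hxF, rfl⟩ := hmem
  exact ⟨⟨x, ⟨hxG, hxF⟩, rfl⟩, Set.forall_mem_image.2 fun y hy => hlow y hy.1 hy.2⟩

variable [Fintype ι]

lemma sum_C_mul_eq_lagrangian_sublevelConstraints (F : κ → MvPolynomial σ ℝ)
    (G : ι → MvPolynomial σ ℝ) (w : κ → ℝ) (z : σ → ℝ) :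
    ∑ j, C (w j) * F j = lagrangian (C (∑ j, w j * eval z (F j))) (sublevelConstraints F G z)
      (Sum.elim 0 w) := by
  simp [lagrangian, sublevelConstraints, mul_sub]

lemma eval_lagrangian_sublevelConstraints (w : κ → ℝ) (z : σ → ℝ) (μ : ι → ℝ) (ν : κ → ℝ)
    (x : σ → ℝ) :
    eval x (lagrangian (∑ j, C (w j) * F j) (sublevelConstraints F G z) (Sum.elim μ ν)) =
      ∑ j, w j * eval x (F j) + ∑ i, μ i * eval x (G i) +
        ∑ j, ν j * (eval x (F j) - eval z (F j)) := by
  simp [eval_lagrangian, sublevelConstraints, add_assoc]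

end ScalarizedProgram

end ConvexSOS

theorem stmt_9 {n m p : ℕ} (F : Fin p → MvPolynomial (Fin n) ℝ)
    (G : Fin m → MvPolynomial (Fin n) ℝ)
    (f : Fin p → (Fin n → ℝ) → ℝ) (hf : ∀ j, f j = fun x => MvPolynomial.eval x (F j))
    (g : Fin m → (Fin n → ℝ) → ℝ) (hg : ∀ i, g i = fun x => MvPolynomial.eval x (G i))
    (hconvf : ∀ j, ConvexOn ℝ Set.univ (f j)) (hconvg : ∀ i, ConvexOn ℝ Set.univ (g i))
    (lam : Fin p → ℝ) (hlam : ∀ j, 0 < lam j)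
    (z₀ : Fin n → ℝ) (hz₀ : ∀ i, g i z₀ ≤ 0)
    -- f̄_{z₀} is the minimum of λᵀf over K_{z₀}
    (fbar : ℝ)
    (hfbar : (∀ x : Fin n → ℝ, (∀ i, g i x ≤ 0) → (∀ j, f j x ≤ f j z₀) →
        fbar ≤ ∑ j, lam j * f j x) ∧
      ∃ x : Fin n → ℝ, (∀ i, g i x ≤ 0) ∧ (∀ j, f j x ≤ f j z₀) ∧
        ∑ j, lam j * f j x = fbar)
    -- Assumption 1: saddle point of the Lagrangian with positive definite Hessian in x
    (L : (Fin n → ℝ) → (Fin m → ℝ) → (Fin p → ℝ) → ℝ)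
    (hL : L = fun x μ ν =>
      ∑ j, lam j * f j x + ∑ i, μ i * g i x + ∑ j, ν j * (f j x - f j z₀))
    (xb : Fin n → ℝ) (μb : Fin m → ℝ) (νb : Fin p → ℝ)
    (hμb : ∀ i, 0 ≤ μb i) (hνb : ∀ j, 0 ≤ νb j)
    (hxb : (∀ i, g i xb ≤ 0) ∧ (∀ j, f j xb ≤ f j z₀))
    (hsaddle1 : ∀ x : Fin n → ℝ, L xb μb νb ≤ L x μb νb)
    (hsaddle2 : ∀ (μ : Fin m → ℝ) (ν : Fin p → ℝ),
      (∀ i, 0 ≤ μ i) → (∀ j, 0 ≤ ν j) → L xb μ ν ≤ L xb μb νb)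
    (hPD : ∀ v : Fin n → ℝ, v ≠ 0 →
      0 < iteratedFDeriv ℝ 2 (fun x => L x μb νb) xb ![v, v]) :
    ∃ (σ₀ : MvPolynomial (Fin n) ℝ) (σ : Fin m → MvPolynomial (Fin n) ℝ)
      (σb : Fin p → MvPolynomial (Fin n) ℝ),
      IsSOS σ₀ ∧ (∀ i, IsSOS (σ i)) ∧ (∀ j, IsSOS (σb j)) ∧
      (∑ j, MvPolynomial.C (lam j) * F j) - MvPolynomial.C fbar =
        σ₀ - ∑ i, σ i * G i - ∑ j, σb j * (F j - MvPolynomial.C (f j z₀)) := by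
  obtain rfl : f = fun j x => MvPolynomial.eval x (F j) := funext hf
  obtain rfl : g = fun i x => MvPolynomial.eval x (G i) := funext hg
  let P := ∑ j, MvPolynomial.C (lam j) * F j
  let h := ConvexSOS.sublevelConstraints F G z₀
  have hevalL (x : Fin n → ℝ) :
      MvPolynomial.eval x (ConvexSOS.lagrangian P h (Sum.elim μb νb)) = L x μb νb := by
    rw [hL, ConvexSOS.eval_lagrangian_sublevelConstraints]
  have hslack : MvPolynomial.eval xb P ≤ L xb μb νb := by
    simpa [P, hL] using hsaddle2 0 0 (fun _ => le_rfl) (fun _ => le_rfl)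
  obtain ⟨s, τ, hs, hτ, hsum⟩ := ConvexSOS.exists_eq_sub_sum_mul_of_saddlePoint (P := P)
    (h := h) (ConvexSOS.convexOn_eval_sublevelConstraints hconvf hconvg z₀)
    (Sum.forall.2 ⟨fun _ => le_rfl, fun j => (hlam j).le⟩)
    (ConvexSOS.sum_C_mul_eq_lagrangian_sublevelConstraints F G lam z₀)
    (Sum.forall.2 ⟨hμb, hνb⟩) (ConvexSOS.forall_eval_sublevelConstraints_nonpos_iff.2 hxb)
    (by rwa [hevalL]) (by simpa only [hevalL] using hsaddle1)
    (by simpa only [hevalL] using hPD)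
    (ConvexSOS.isLeast_image_sublevelConstraints hfbar.1 hfbar.2)
  refine ⟨s, τ ∘ Sum.inl, τ ∘ Sum.inr, ConvexSOS.isSOS_of_isSumSq hs,
    fun _ => ConvexSOS.isSOS_of_isSumSq (hτ _), fun _ => ConvexSOS.isSOS_of_isSumSq (hτ _), ?_⟩
  simpa [P, h, ConvexSOS.sublevelConstraints, sub_sub] using hsum
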